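/- arXiv:1708.01807 — 4 statements merged into one kernel-verified Lean document; each statement's English description precedes it below -/
import Mathlib

section
/- Let ψ be a faithful 1-dimensional complex representation of the subgroup X. Then the induced representation Ind_X^G ψ is an irreducible and faithful complex representation of G. -/
/-!
Write `X = ⟨a, b ^ p ^ r⟩`. The group theory of `G` enters only through two facts: `X` is normal
and equals its own centralizer. Both follow from `X = C_G(⟨a⟩)` with `⟨a⟩` normal
(`closure_eq_centralizer`): every element of `G` is `a ^ i * b ^ k`, and it commutes with `a` iff
`j ^ k = 1` modulo `q`, that is, iff `p ^ r ∣ k`.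

Existence holds for any linear character of any subgroup. The space of `ψ`-equivariant functions on
`G` is the image of an averaging projection on all functions, so the trace of a group element on it
is a trace over the basis of delta functions, which is the induced character formula
(`coind_trace`).

For irreducibility, the norm of the induced character expands into the inner products on `X` of `ψ`
with its conjugates. As `ψ` is faithful, the conjugate by `z` equals `ψ` only when `z` centralizes
`X`, hence lies in `X`; so the norm is one (`sum_inducedCharacter_mul_inv`), which characterizes
simple representations over `ℂ`. For faithfulness, an element acting trivially has character value
equal to the degree. The induced character vanishes off `X`, and its values on `X` are averages
of roots of unity, so `ψ` takes the value `1` at that element, which is therefore trivial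
(`eq_one_of_inducedCharacter_eq`).
-/

open CategoryTheory Finset

open scoped Classical in
/-- The character of the representation of `G` induced from a one-dimensional complex
representation `ψ` of a subgroup `X`, given by the standard induced character formula
`g ↦ |X|⁻¹ * ∑_{x ∈ G, x g x⁻¹ ∈ X} ψ (x g x⁻¹)`. -/
noncomputable def inducedCharacter {G : Type} [Group G] [Fintype G] (X : Subgroup G)
    (ψ : X →* ℂˣ) : G → ℂ :=
  fun g => (Nat.card X : ℂ)⁻¹ *
    ∑ x : G, if h : x * g * x⁻¹ ∈ X then ((ψ ⟨x * g * x⁻¹, h⟩ : ℂˣ) : ℂ) else 0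

/-! ### Induced characters of linear characters -/

open scoped Classical in
/-- The extension by zero to `G` of a linear character `ψ` of the subgroup `X`. -/
noncomputable def extendZero {G : Type} [Group G] (X : Subgroup G) (ψ : X →* ℂˣ) (g : G) : ℂ :=
  if h : g ∈ X then ((ψ ⟨g, h⟩ : ℂˣ) : ℂ) else 0

section General

variable {G : Type} [Group G] (X : Subgroup G) (ψ : X →* ℂˣ)

/-- The one-dimensional representation of `X` on `ℂ` afforded by `ψ`. -/
noncomputable def lineRep : Representation ℂ X ℂ :=
  (Algebra.lmul ℂ ℂ : ℂ →* Module.End ℂ ℂ).comp ((Units.coeHom ℂ).comp ψ)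

lemma lineRep_apply (x : X) (v : ℂ) : lineRep X ψ x v = ψ x * v := rfl

variable [Fintype G]

lemma inducedCharacter_apply (g : G) :
    inducedCharacter X ψ g = (Nat.card X : ℂ)⁻¹ * ∑ x : G, extendZero X ψ (x * g * x⁻¹) := rfl

lemma card_ne : (Nat.card X : ℂ) ≠ 0 := by
  exact_mod_cast Nat.card_pos.ne'

open scoped Classical in
/-- The averaging projection of the space of functions `G → ℂ` onto the space
`Representation.coindV` of `ψ`-equivariant functions, `f ↦ |X|⁻¹ ∑_{x ∈ X} ψ(x) f(x⁻¹ ·)`. -/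
noncomputable def avg : (G → ℂ) →ₗ[ℂ] (G → ℂ) :=
  (Nat.card X : ℂ)⁻¹ • ∑ x : X, (ψ x : ℂ) • LinearMap.funLeft ℂ ℂ (fun h : G => (x : G)⁻¹ * h)

open scoped Classical in
lemma avg_apply (f : G → ℂ) (h : G) :
    avg X ψ f h = (Nat.card X : ℂ)⁻¹ * ∑ x : X, (ψ x : ℂ) * f ((x : G)⁻¹ * h) := by
  simp [avg, LinearMap.funLeft_apply]

lemma avg_mem (f : G → ℂ) : avg X ψ f ∈ Representation.coindV X.subtype (lineRep X ψ) := by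
  classical
  intro y h
  rw [lineRep_apply, avg_apply, avg_apply, mul_left_comm, Finset.mul_sum _ _ (ψ y : ℂ)]
  congr 1
  refine Fintype.sum_equiv (Equiv.mulLeft y⁻¹) _ _ fun x => ?_
  simp [mul_assoc]

lemma avg_of_mem (f : G → ℂ) (hf : f ∈ Representation.coindV X.subtype (lineRep X ψ)) :
    avg X ψ f = f := by
  classical
  ext h
  rw [avg_apply, Finset.sum_congr rfl (g := fun _ => f h)]
  · rw [Finset.sum_const, Finset.card_univ, ← Nat.card_eq_fintype_card, nsmul_eq_mul,
      inv_mul_cancel_left₀ (card_ne X)]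
  · intro x _
    have := hf x⁻¹ h
    rw [lineRep_apply] at this
    simp only [Subgroup.coe_subtype, InvMemClass.coe_inv] at this
    rw [this]
    simp

/-- The induced representation, realized on equivariant functions, has the induced character:
its trace is the trace on all of `G → ℂ` of translation composed with the averaging projection. -/
lemma coind_trace (g : G) :
    LinearMap.trace ℂ _ (Representation.coind X.subtype (lineRep X ψ) g) =
      inducedCharacter X ψ g := by
  classical
  set T : (G → ℂ) →ₗ[ℂ] (G → ℂ) := LinearMap.funLeft ℂ ℂ (· * g) ∘ₗ avg X ψ with hT
  have hmem : ∀ f, T f ∈ Representation.coindV X.subtype (lineRep X ψ) := fun f =>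
    ((Representation.coind X.subtype (lineRep X ψ) g) ⟨_, avg_mem X ψ f⟩).2
  have h1 : Representation.coind X.subtype (lineRep X ψ) g = T.restrict fun f _ => hmem f := by
    ext f h
    simp only [hT, LinearMap.coe_restrict_apply, LinearMap.comp_apply, avg_of_mem X ψ _ f.2]
    rfl
  rw [h1, LinearMap.trace_restrict_eq_of_forall_mem _ _ hmem,
    LinearMap.trace_eq_matrix_trace ℂ (Pi.basisFun ℂ G), Matrix.trace, inducedCharacter_apply,
    Finset.mul_sum]
  refine Finset.sum_congr rfl fun h _ => ?_
  simp only [Matrix.diag_apply, LinearMap.toMatrix_apply, Pi.basisFun_repr, Pi.basisFun_apply, hT,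
    LinearMap.comp_apply, LinearMap.funLeft_apply, avg_apply]
  congr 1
  have key : ∀ x : X, (x : G)⁻¹ * (h * g) = h ↔ (x : G) = h * g * h⁻¹ := fun x => by
    rw [inv_mul_eq_iff_eq_mul, eq_mul_inv_iff_mul_eq, eq_comm]
  simp only [Pi.single_apply, key, mul_ite, mul_one, mul_zero, extendZero]
  split_ifs with hm
  · rw [Finset.sum_eq_single_of_mem (⟨_, hm⟩ : X) (Finset.mem_univ _)]
    · simp
    · intro x _ hx
      exact if_neg fun e => hx (Subtype.ext e)
  · exact Finset.sum_eq_zero fun x _ => if_neg fun e => hm (by rw [← e]; exact x.2)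

lemma exists_character_eq : ∃ τ : FDRep ℂ G, τ.character = inducedCharacter X ψ :=
  ⟨FDRep.of (Representation.coind X.subtype (lineRep X ψ)), funext fun g => coind_trace X ψ g⟩

variable {X ψ}

/-- An element at which the induced character attains its degree is trivial: a sum of `|G|`
complex numbers, each zero or a root of unity, equals `|G|` only if all of them are `1`, and
`extendZero X ψ g = 1` forces `g ∈ X` and `ψ g = 1`. -/
lemma eq_one_of_inducedCharacter_eq (hψ : Function.Injective ψ) (g : G)
    (hg : inducedCharacter X ψ g = inducedCharacter X ψ 1) : g = 1 := by
  classical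
  rw [inducedCharacter_apply, inducedCharacter_apply,
    mul_right_inj' (inv_ne_zero (card_ne X))] at hg
  have hone : extendZero X ψ 1 = 1 := by
    rw [extendZero, dif_pos X.one_mem]
    exact congrArg Units.val (map_one ψ)
  have hnorm : ∀ y, ‖extendZero X ψ y‖ ≤ 1 := by
    intro y
    rw [extendZero]
    split_ifs with h
    · refine le_of_eq (Complex.norm_eq_one_of_pow_eq_one (n := Nat.card X) ?_ Nat.card_pos.ne')
      rw [← Units.val_pow_eq_pow_val, ← map_pow, pow_card_eq_one', map_one, Units.val_one]
    · simp
  have hre : ∀ x : G, (extendZero X ψ (x * g * x⁻¹)).re = 1 := by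
    have hle : ∀ x ∈ (Finset.univ : Finset G), (extendZero X ψ (x * g * x⁻¹)).re ≤ 1 := fun x _ =>
      (Complex.re_le_norm _).trans (hnorm _)
    have := (Finset.sum_eq_sum_iff_of_le hle).1 (by
      simpa [hone] using congrArg Complex.re hg)
    exact fun x => this x (Finset.mem_univ x)
  have h1 := hre 1
  simp only [one_mul, inv_one, mul_one] at h1
  have h2 : extendZero X ψ g = 1 := by
    have h3 := hnorm g
    have h4 := Complex.sq_norm (extendZero X ψ g)
    rw [Complex.normSq_apply, h1] at h4
    have h5 : (extendZero X ψ g).im = 0 := by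
      nlinarith [norm_nonneg (extendZero X ψ g)]
    exact Complex.ext h1 h5
  rw [extendZero] at h2
  split_ifs at h2 with hgX
  · have h3 : ψ ⟨g, hgX⟩ = ψ 1 := by rw [map_one]; exact Units.ext h2
    exact congrArg Subtype.val (hψ h3)
  · exact absurd h2 zero_ne_one

variable [hX : X.Normal]

/-- Orthogonality on `X` of `ψ` and its conjugate by `z`: these coincide, `ψ` being faithful,
exactly when `z` centralizes `X`. -/
lemma sum_extendZero_mul_conj (hψ : Function.Injective ψ)
    (hc : Subgroup.centralizer (X : Set G) = X) (z : G) [Decidable (z ∈ X)] :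
    ∑ h : G, extendZero X ψ h * extendZero X ψ (z * h⁻¹ * z⁻¹) =
      if z ∈ X then (Nat.card X : ℂ) else 0 := by
  classical
  let F : X →* ℂ := (Units.coeHom ℂ).comp (ψ * (ψ.comp (MulAut.conjNormal z).toMonoidHom)⁻¹)
  have h1 : ∑ h : G, extendZero X ψ h * extendZero X ψ (z * h⁻¹ * z⁻¹) = ∑ x : X, F x := by
    refine (Fintype.sum_of_injective ((↑) : X → G) Subtype.val_injective _ _ ?_ ?_).symm
    · intro h hh
      have : h ∉ X := fun e => hh ⟨⟨h, e⟩, rfl⟩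
      simp [extendZero, this]
    · intro x
      have e : (⟨z * (x : G)⁻¹ * z⁻¹, hX.conj_mem _ (X.inv_mem x.2) z⟩ : X) =
          (MulAut.conjNormal z x)⁻¹ := by
        ext; simp [mul_assoc]
      rw [extendZero, dif_pos x.2, extendZero, dif_pos (hX.conj_mem _ (X.inv_mem x.2) z), e]
      simp [F]
  have h2 : F = 1 ↔ z ∈ X := by
    have h3 : F = 1 ↔ ∀ x : X, MulAut.conjNormal z x = x := by
      rw [DFunLike.ext_iff]
      refine forall_congr' fun x => ?_
      change ((ψ x * (ψ (MulAut.conjNormal z x))⁻¹ : ℂˣ) : ℂ) = 1 ↔ _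
      rw [Units.val_eq_one, mul_inv_eq_one, hψ.eq_iff, eq_comm]
    have h4 : z ∈ X ↔ ∀ x ∈ (X : Set G), x * z = z * x := by
      rw [← Subgroup.mem_centralizer_iff, hc]
    rw [h3, h4]
    refine Subtype.forall.trans (forall₂_congr fun x hx => ?_)
    rw [Subtype.ext_iff, MulAut.conjNormal_apply, mul_inv_eq_iff_eq_mul, eq_comm]
  rw [h1]
  split_ifs with hz
  · rw [h2.2 hz]
    simp [Nat.card_eq_fintype_card]
  · exact sum_hom_units_eq_zero F fun e => hz (h2.1 e)

/-- The induced character has norm one when `ψ` is faithful and `X` is normal and equal to its own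
centralizer. -/
lemma sum_inducedCharacter_mul_inv (hψ : Function.Injective ψ)
    (hc : Subgroup.centralizer (X : Set G) = X) :
    ∑ g : G, inducedCharacter X ψ g * inducedCharacter X ψ g⁻¹ = Nat.card G := by
  classical
  have h1 : ∀ x : G, ∑ y : G, ∑ g : G,
      extendZero X ψ (x * g * x⁻¹) * extendZero X ψ (y * g⁻¹ * y⁻¹) =
        (Nat.card X : ℂ) * Nat.card X := by
    intro x
    have h2 : ∀ y : G, ∑ g : G,
        extendZero X ψ (x * g * x⁻¹) * extendZero X ψ (y * g⁻¹ * y⁻¹) =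
          if y * x⁻¹ ∈ X then (Nat.card X : ℂ) else 0 := by
      intro y
      rw [← sum_extendZero_mul_conj hψ hc]
      refine Fintype.sum_equiv (MulAut.conj x).toEquiv _ _ fun g => ?_
      simp [mul_assoc]
    rw [Finset.sum_congr rfl fun y _ => h2 y,
      Fintype.sum_equiv (Equiv.mulRight x⁻¹) (fun y => if y * x⁻¹ ∈ X then (Nat.card X : ℂ) else 0)
        (fun z => if z ∈ X then (Nat.card X : ℂ) else 0) fun y => rfl, ← Finset.sum_filter, Finset.sum_const, nsmul_eq_mul]
    congr 2
    rw [Nat.card_eq_fintype_card, Fintype.card_subtype]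
  calc _ = (Nat.card X : ℂ)⁻¹ * (Nat.card X : ℂ)⁻¹ * ∑ x : G, ∑ y : G, ∑ g : G,
      extendZero X ψ (x * g * x⁻¹) * extendZero X ψ (y * g⁻¹ * y⁻¹) := by
        simp_rw [inducedCharacter_apply, mul_mul_mul_comm _ _ (Nat.card X : ℂ)⁻¹,
          Finset.sum_mul_sum]
        rw [← Finset.mul_sum, Finset.sum_comm]
        exact congrArg _ (Finset.sum_congr rfl fun x _ => Finset.sum_comm)
    _ = _ := by
        rw [Finset.sum_congr rfl fun x _ => h1 x, Finset.sum_const, Finset.card_univ,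
          ← Nat.card_eq_fintype_card, nsmul_eq_mul]
        field_simp [card_ne X]

lemma simple_and_faithful (hψ : Function.Injective ψ)
    (hc : Subgroup.centralizer (X : Set G) = X) (τ : FDRep ℂ G)
    (hτ : τ.character = inducedCharacter X ψ) : Simple τ ∧ Function.Injective τ.ρ := by
  refine ⟨?_, (injective_iff_map_eq_one _).2 fun g hg => ?_⟩
  · rw [FDRep.simple_iff_char_is_norm_one, hτ, sum_inducedCharacter_mul_inv hψ hc]
  · refine eq_one_of_inducedCharacter_eq hψ g ?_
    rw [← hτ, FDRep.character, FDRep.character, hg, map_one τ.ρ]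

end General

/-! ### The subgroup `X` of the metacyclic group -/

section Metacyclic

variable {G : Type} [Group G] {a b : G} {j : ℕ}

lemma conj_pow_eq (hba : b * a * b⁻¹ = a ^ j) (k : ℕ) : b ^ k * a * (b ^ k)⁻¹ = a ^ j ^ k := by
  induction k with
  | zero => simp
  | succ k ih =>
    calc b ^ (k + 1) * a * (b ^ (k + 1))⁻¹ = b * (b ^ k * a * (b ^ k)⁻¹) * b⁻¹ := by
          rw [pow_succ']; group
      _ = (b * a * b⁻¹) ^ j ^ k := by rw [ih, conj_pow]
      _ = a ^ j ^ (k + 1) := by rw [hba, ← pow_mul, ← pow_succ']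

lemma conj_pow_eq_self_iff (hba : b * a * b⁻¹ = a ^ j) (k : ℕ) :
    b ^ k * a * (b ^ k)⁻¹ = a ↔ orderOf (j : ZMod (orderOf a)) ∣ k := by
  rw [conj_pow_eq hba, orderOf_dvd_iff_pow_eq_one]
  conv_lhs => rw [← pow_one a, ← pow_mul, one_mul, pow_eq_pow_iff_modEq]
  rw [← ZMod.natCast_eq_natCast_iff]
  simp

variable [Finite G]

lemma zpowers_normal (hba : b * a * b⁻¹ = a ^ j) (hgen : Subgroup.closure {a, b} = ⊤) :
    (Subgroup.zpowers a).Normal := by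
  rw [← Subgroup.normalizer_eq_top_iff, eq_top_iff, ← hgen, Subgroup.closure_le]
  rintro x (rfl | rfl)
  · exact Subgroup.le_normalizer (Subgroup.mem_zpowers x)
  · refine Subgroup.mem_normalizer_fintype ?_
    rintro _ ⟨k, rfl⟩
    simp only
    rw [← conj_zpow, hba]
    exact Subgroup.zpow_mem _ (Subgroup.pow_mem _ (Subgroup.mem_zpowers a) _) _

/-- As `b ^ k` acts on `⟨a⟩` by raising to the power `j ^ k`, an element `a ^ i * b ^ k`
centralizes `a` exactly when `k` is a multiple of the order of `j`. -/
lemma closure_eq_centralizer (hba : b * a * b⁻¹ = a ^ j) (hgen : Subgroup.closure {a, b} = ⊤) :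
    Subgroup.closure {a, b ^ orderOf (j : ZMod (orderOf a))} =
      Subgroup.centralizer (Subgroup.zpowers a : Set G) := by
  have hN := zpowers_normal hba hgen
  apply le_antisymm
  · have hcomm : ∀ x : G, Commute a x → x ∈ Subgroup.centralizer (Subgroup.zpowers a : Set G) := by
      intro x hx
      rw [Subgroup.mem_centralizer_iff]
      rintro _ ⟨i, rfl⟩
      exact (hx.zpow_left i).eq
    rw [Subgroup.closure_le]
    rintro x (rfl | rfl)
    · exact hcomm _ (Commute.refl _)
    · exact hcomm _ (mul_inv_eq_iff_eq_mul.1 ((conj_pow_eq_self_iff hba _).2 dvd_rfl)).symm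
  · intro g hg
    have hga : a * g = g * a := Subgroup.mem_centralizer_iff.1 hg a (Subgroup.mem_zpowers a)
    have htop : g ∈ Subgroup.zpowers a ⊔ Subgroup.zpowers b := by
      rw [Subgroup.zpowers_eq_closure, Subgroup.zpowers_eq_closure, ← Subgroup.closure_union,
        Set.singleton_union, hgen]
      trivial
    obtain ⟨x, hx, y, hy, rfl⟩ := Subgroup.mem_sup_of_normal_left.1 htop
    obtain ⟨k, rfl⟩ := mem_powers_iff_mem_zpowers.2 hy
    have ha : a ∈ Subgroup.closure {a, b ^ orderOf (j : ZMod (orderOf a))} :=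
      Subgroup.subset_closure (by simp)
    have hb : b ^ orderOf (j : ZMod (orderOf a)) ∈
        Subgroup.closure {a, b ^ orderOf (j : ZMod (orderOf a))} :=
      Subgroup.subset_closure (by simp)
    refine Subgroup.mul_mem _ ((Subgroup.zpowers_le.2 ha) hx) ?_
    have hxa : Commute a x := by
      obtain ⟨i, rfl⟩ := hx
      exact (Commute.refl a).zpow_right i
    have hka : a * b ^ k = b ^ k * a := by
      have h1 : x * (a * b ^ k) = x * (b ^ k * a) := by
        rw [← mul_assoc, ← hxa.eq, mul_assoc]
        simpa [mul_assoc] using hga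
      exact mul_left_cancel h1
    obtain ⟨m, rfl⟩ := (conj_pow_eq_self_iff hba k).1 (by rw [← hka, mul_inv_cancel_right])
    simp only [pow_mul]
    exact Subgroup.pow_mem _ hb m

end Metacyclic

/-- Let `p, q` be distinct odd primes, `G = C_q ⋊ C_{p^n}` non-abelian
(presented by `a, b` with `a^q = b^{p^n} = 1`, `b a b⁻¹ = a^j`, `j` of order `p^r` mod `q`),
and `X = ⟨a, b^{p^r}⟩`.  If `ψ` is a faithful one-dimensional complex representation of `X`,
then the induced representation `Ind_X^G ψ` — i.e. the (unique up to isomorphism) complex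
representation of `G` whose character is the induced character of `ψ` — is irreducible and
faithful. -/
theorem induced_of_faithful_character_irreducible_faithful
    (p q n r : ℕ) (hp : p.Prime) (hq : q.Prime) (hpodd : Odd p) (hqodd : Odd q)
    (hpq : p ≠ q) (hn : 1 ≤ n) (hr0 : 0 < r) (hrn : r ≤ n) (hrdvd : p ^ r ∣ q - 1)
    (G : Type) [Group G] [Fintype G] (a b : G) (j : ℕ)
    (ha : orderOf a = q) (hb : orderOf b = p ^ n)
    (hba : b * a * b⁻¹ = a ^ j) (hj : orderOf (j : ZMod q) = p ^ r)
    (hgen : Subgroup.closure {a, b} = ⊤)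
    (ψ : (Subgroup.closure {a, b ^ p ^ r} : Subgroup G) →* ℂˣ)
    (hψ : Function.Injective ψ) :
    (∃ τ : FDRep ℂ G,
        τ.character = inducedCharacter (Subgroup.closure {a, b ^ p ^ r}) ψ) ∧
      ∀ τ : FDRep ℂ G,
        τ.character = inducedCharacter (Subgroup.closure {a, b ^ p ^ r}) ψ →
          Simple τ ∧ Function.Injective τ.ρ := by
  subst ha
  have hX : Subgroup.closure {a, b ^ p ^ r} =
      Subgroup.centralizer (Subgroup.zpowers a : Set G) := by
    rw [← hj]
    exact closure_eq_centralizer hba hgen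
  have hN := zpowers_normal hba hgen
  have hXN : (Subgroup.closure {a, b ^ p ^ r}).Normal := by
    rw [hX]
    infer_instance
  refine ⟨exists_character_eq _ ψ, fun τ hτ => simple_and_faithful hψ (le_antisymm ?_ ?_) τ hτ⟩
  · refine (Subgroup.centralizer_le ?_).trans hX.ge
    exact Subgroup.zpowers_le.2 (Subgroup.subset_closure (by simp))
  · -- `X` embeds in `ℂˣ`, so it is commutative.
    intro x hx
    rw [Subgroup.mem_centralizer_iff]
    intro y hy
    have : (⟨y, hy⟩ * ⟨x, hx⟩ : (Subgroup.closure {a, b ^ p ^ r} : Subgroup G)) =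
        ⟨x, hx⟩ * ⟨y, hy⟩ := hψ (by rw [map_mul, map_mul, mul_comm])
    exact congrArg Subtype.val this
end

section
/- Let ψ be a faithful 1-dimensional complex representation of X and τ = Ind_X^G ψ the (faithful irreducible) induced representation of G, and let F ⊆ ℂ be a subfield. Then the field F(ψ) generated over F by the values of ψ equals F(ζ_q, ζ_{p^{n−r}}), and the field F(τ) generated over F by the values of the character of τ equals F(ζ_{p^{n−r}}, Σ_{t∈H} ζ_q^t), where H is the unique subgroup of order p^r of (ℤ/qℤ)^× and ζ_m denotes a primitive m-th root of unity in ℂ. -/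
/-!
Write `c = b ^ p ^ r`, `α = ψ a`, `β = ψ c`. Since `ψ` is injective, `α` and `β` are primitive roots
of unity of orders `q` and `p ^ (n - r)`, and every element of `X` has the form `a ^ i * c ^ k`.
As primitive roots of the same order are powers of each other, this gives the field of `ψ`.

Conjugation on `⟨a⟩` defines `χ : G →* (ZMod q)ˣ` with `y a y⁻¹ = a ^ χ y`. Its range is generated
by `j`, so it is `H`, the only subgroup of its order in a cyclic group (`exists_action`,
`subgroup_eq_of_card_eq`). The element `c` is central and `X` is normal, so the induced
character vanishes off `X`, and collecting the elements of `G` along the fibres of `χ` gives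
`τ (a ^ i * c ^ k) = κ * β ^ k * ∑ t ∈ H, (α ^ i) ^ t` with `κ = |ker χ| / |X|`, a nonzero rational
number (`inducedCharacter_eq`). Hence `F(τ)` is generated by `β` and the periods
`∑ t ∈ H, (α ^ i) ^ t`.

The remaining point is that all Gaussian periods of nontrivial `q`-th roots of unity generate the
same field. They are conjugate over `ℚ`, and each generates a normal extension because
the cyclotomic field is abelian over `ℚ` (`period_mem_closure`, `mem_closure_of_period`).
-/

open IntermediateField in
/-- The periods over `H` of two primitive `q`-th roots of unity lie in each other's fields: they are
conjugate by some `σ`, and as the Galois group is commutative, `σ P` is fixed by every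
automorphism that fixes `P`. -/
theorem period_mem_closure {q : ℕ} [NeZero q] (H : Subgroup (ZMod q)ˣ) [Fintype H]
    {K : Type*} [Field K] [Algebra ℚ K] [IsCyclotomicExtension {q} ℚ K]
    {Z W : K} (hZ : IsPrimitiveRoot Z q) (hW : IsPrimitiveRoot W q) :
    ∑ t : H, W ^ (((t : (ZMod q)ˣ) : ZMod q)).val ∈
      Subfield.closure {∑ t : H, Z ^ (((t : (ZMod q)ˣ) : ZMod q)).val} := by
  have hfd : FiniteDimensional ℚ K := IsCyclotomicExtension.finiteDimensional {q} ℚ _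
  have hgal : IsGalois ℚ K := IsCyclotomicExtension.isGalois {q} ℚ _
  have hcomm := IsCyclotomicExtension.isMulCommutative {q} ℚ K
  have hirr := Polynomial.cyclotomic.irreducible_rat (NeZero.pos q)
  have hmin : minpoly ℚ (hZ.powerBasis ℚ).gen = minpoly ℚ (hW.powerBasis ℚ).gen := by
    simp only [IsPrimitiveRoot.powerBasis_gen]
    exact (hZ.minpoly_eq_cyclotomic_of_irreducible hirr).symm.trans
      (hW.minpoly_eq_cyclotomic_of_irreducible hirr)
  obtain ⟨σ, hσ⟩ : ∃ σ : K ≃ₐ[ℚ] K, σ Z = W := by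
    refine ⟨(hZ.powerBasis ℚ).equivOfMinpoly (hW.powerBasis ℚ) hmin, ?_⟩
    have := (hZ.powerBasis ℚ).equivOfMinpoly_gen (hW.powerBasis ℚ) hmin
    simpa only [IsPrimitiveRoot.powerBasis_gen] using this
  set P : K := ∑ t : H, Z ^ (((t : (ZMod q)ˣ) : ZMod q)).val with hP
  have hmem : σ P ∈ ℚ⟮P⟯ := by
    rw [← IsGalois.fixedField_fixingSubgroup ℚ⟮P⟯, IntermediateField.mem_fixedField_iff]
    intro τ hτ
    have h1 : τ P = P :=
      (IntermediateField.mem_fixingSubgroup_iff _ _).1 hτ P (mem_adjoin_simple_self ℚ P)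
    have h2 := DFunLike.congr_fun (hcomm.is_comm.comm τ σ) P
    simp only [AlgEquiv.mul_apply] at h2
    rw [h2, h1]
  have h5 : σ P = ∑ t : H, W ^ (((t : (ZMod q)ˣ) : ZMod q)).val := by
    simp [hP, hσ]
  rw [h5, ← IntermediateField.mem_toSubfield, IntermediateField.adjoin_toSubfield] at hmem
  refine Subfield.closure_le.2 (Set.union_subset ?_ Subfield.subset_closure) hmem
  rintro _ ⟨x, rfl⟩
  simp

/-- `period_mem_closure` for roots of unity in `ℂ`, by embedding a cyclotomic field `K`. The field `K`
and its `ℚ`-algebra structure are kept abstract, so that the latter is the one for which `K` is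
known to be cyclotomic. -/
theorem period_mem_closure_complex {q : ℕ} [NeZero q] (H : Subgroup (ZMod q)ˣ) [Fintype H]
    (K : Type*) [Field K] [Algebra ℚ K] [IsCyclotomicExtension {q} ℚ K]
    {z w : ℂ} (hz : IsPrimitiveRoot z q) (hw : IsPrimitiveRoot w q) :
    ∑ t : H, w ^ (((t : (ZMod q)ˣ) : ZMod q)).val ∈
      Subfield.closure {∑ t : H, z ^ (((t : (ZMod q)ˣ) : ZMod q)).val} := by
  have hfd : FiniteDimensional ℚ K := IsCyclotomicExtension.finiteDimensional {q} ℚ K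
  let f : K →+* ℂ := (IsAlgClosed.lift : K →ₐ[ℚ] ℂ)
  have hf := (IsCyclotomicExtension.zeta_spec q ℚ K).map_of_injective f.injective
  obtain ⟨k, -, hk⟩ := hf.eq_pow_of_pow_eq_one hz.pow_eq_one
  obtain ⟨l, -, hl⟩ := hf.eq_pow_of_pow_eq_one hw.pow_eq_one
  rw [← map_pow] at hk hl
  subst hk hl
  have := (Subfield.mem_map (f := f)).2 ⟨_, period_mem_closure H (hz.of_map_of_injective f.injective)
    (hw.of_map_of_injective f.injective), rfl⟩
  rw [RingHom.map_field_closure, Set.image_singleton] at this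
  simpa only [map_sum, map_pow] using this

theorem mem_closure_of_period {q : ℕ} [NeZero q] (H : Subgroup (ZMod q)ˣ) [Fintype H]
    {z w : ℂ} (hz : IsPrimitiveRoot z q) (hw : IsPrimitiveRoot w q) :
    ∑ t : H, w ^ (((t : (ZMod q)ˣ) : ZMod q)).val ∈
      Subfield.closure {∑ t : H, z ^ (((t : (ZMod q)ˣ) : ZMod q)).val} :=
  have : NeZero (q : ℚ) := ⟨Nat.cast_ne_zero.2 (NeZero.ne q)⟩
  @period_mem_closure_complex q _ H _ (CyclotomicField q ℚ) _ (CyclotomicField.algebra q ℚ)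
    (CyclotomicField.isCyclotomicExtension q ℚ) z w hz hw

/-- In a finite cyclic group a subgroup of order `d` is the full set of solutions of `x ^ d = 1`. -/
theorem subgroup_eq_of_card_eq {C : Type*} [Group C] [Finite C] [IsCyclic C]
    {S T : Subgroup C} (h : Nat.card S = Nat.card T) : S = T := by
  classical
  cases nonempty_fintype C
  suffices key : ∀ U : Subgroup C, Nat.card U = Nat.card T →
      Finset.univ.filter (fun x => x ∈ U) = Finset.univ.filter (fun x : C => x ^ Nat.card T = 1) by
    ext x
    have := (key S h).trans (key T rfl).symm
    simpa using Finset.ext_iff.1 this x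
  intro U hU
  refine Finset.eq_of_subset_of_card_le ?_ ?_
  · intro x hx
    simp only [Finset.mem_filter, Finset.mem_univ, true_and] at hx ⊢
    rw [← hU]
    exact congrArg Subtype.val (pow_card_eq_one' (x := (⟨x, hx⟩ : U)))
  · refine (IsCyclic.card_pow_eq_one_le Nat.card_pos).trans ?_
    rw [← hU, Nat.card_eq_fintype_card, Fintype.card_subtype]

theorem sum_comp_hom {A B : Type*} [Group A] [Fintype A] [Group B] (χ : A →* B)
    (H : Subgroup B) [Fintype H] (hH : χ.range = H) (f : B → ℂ) :
    ∑ y, f (χ y) = (Nat.card χ.ker : ℂ) * ∑ t : H, f t := by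
  classical
  subst hH
  rw [← Finset.sum_fiberwise (s := Finset.univ) (g := χ.rangeRestrict), Finset.mul_sum]
  refine Finset.sum_congr rfl fun t _ => ?_
  have h1 : ∀ y ∈ Finset.univ.filter (fun y => χ.rangeRestrict y = t), f (χ y) = f t := by
    intro y hy
    rw [← (Finset.mem_filter.1 hy).2]; rfl
  rw [Finset.sum_congr rfl h1, Finset.sum_const, nsmul_eq_mul]
  congr 2
  rw [MonoidHom.card_fiber_eq_of_mem_range χ.rangeRestrict (y := 1)
    (χ.rangeRestrict_surjective t) (χ.rangeRestrict_surjective 1),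
    Nat.card_eq_fintype_card, Fintype.card_subtype]
  congr 1
  ext y
  simp [MonoidHom.mem_ker, Subtype.ext_iff]

/-- Conjugation on `⟨a⟩`, as a homomorphism to `(ZMod q)ˣ`. Its range is generated by the image `j`
of `b`, because `a` acts trivially. -/
theorem exists_action {G : Type} [Group G] [Finite G] {q j : ℕ} [NeZero q] (a b : G)
    (ha : orderOf a = q) (hba : b * a * b⁻¹ = a ^ j) (hj : IsUnit (j : ZMod q))
    (hgen : Subgroup.closure {a, b} = ⊤) :
    ∃ χ : G →* (ZMod q)ˣ, (∀ y, y * a * y⁻¹ = a ^ ((χ y : ZMod q)).val) ∧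
      χ.range = Subgroup.zpowers hj.unit := by
  have hpow : ∀ k l : ℕ, (k : ZMod q) = l → a ^ k = a ^ l := by
    intro k l h
    rw [pow_eq_pow_iff_modEq, ha]
    exact (ZMod.natCast_eq_natCast_iff _ _ _).1 h
  have hinj : ∀ u v : (ZMod q)ˣ, a ^ (u : ZMod q).val = a ^ (v : ZMod q).val → u = v := by
    intro u v h
    rw [pow_eq_pow_iff_modEq, ha, ← ZMod.natCast_eq_natCast_iff] at h
    ext
    simpa using h
  have hconj : ∀ (y z : G) (u v : (ZMod q)ˣ), y * a * y⁻¹ = a ^ (u : ZMod q).val →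
      z * a * z⁻¹ = a ^ (v : ZMod q).val →
      (y * z) * a * (y * z)⁻¹ = a ^ ((u * v : (ZMod q)ˣ) : ZMod q).val := by
    intro y z u v hu hv
    have : (y * z) * a * (y * z)⁻¹ = y * (z * a * z⁻¹) * y⁻¹ := by group
    rw [this, hv, ← conj_pow, hu, ← pow_mul]
    apply hpow
    simp
  have hex : ∀ y : G, ∃ u : (ZMod q)ˣ, y * a * y⁻¹ = a ^ (u : ZMod q).val := by
    intro y
    have hy : y ∈ Subgroup.closure {a, b} := hgen ▸ Subgroup.mem_top y
    induction hy using Subgroup.closure_induction with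
    | mem x hx =>
      rcases hx with rfl | rfl
      · refine ⟨1, ?_⟩
        rw [mul_inv_cancel_right]
        conv_lhs => rw [← pow_one x]
        apply hpow
        simp
      · refine ⟨hj.unit, ?_⟩
        rw [hba]
        apply hpow
        simp
    | one =>
        refine ⟨1, ?_⟩
        rw [one_mul, inv_one, mul_one]
        conv_lhs => rw [← pow_one a]
        apply hpow
        simp
    | mul x y _ _ hx hy =>
      obtain ⟨u, hu⟩ := hx
      obtain ⟨v, hv⟩ := hy
      exact ⟨u * v, hconj _ _ _ _ hu hv⟩
    | inv x _ hx =>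
      obtain ⟨u, hu⟩ := hx
      refine ⟨u⁻¹, ?_⟩
      have h1 : x * a ^ ((u⁻¹ : (ZMod q)ˣ) : ZMod q).val * x⁻¹ = a := by
        rw [← conj_pow, hu, ← pow_mul]
        conv_rhs => rw [← pow_one a]
        apply hpow
        simp
      conv_lhs => rw [← h1]
      group
  choose χ hχ using hex
  let X : G →* (ZMod q)ˣ := MonoidHom.mk' χ fun y z =>
    hinj _ _ ((hχ _).symm.trans (hconj _ _ _ _ (hχ y) (hχ z)))
  have hXa : X a = 1 := by
    apply hinj
    change a ^ ((χ a : ZMod q)).val = _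
    rw [← hχ, mul_inv_cancel_right]
    conv_lhs => rw [← pow_one a]
    apply hpow
    simp
  have hXb : X b = hj.unit := by
    apply hinj
    change a ^ ((χ b : ZMod q)).val = _
    rw [← hχ, hba]
    apply hpow
    simp
  refine ⟨X, hχ, ?_⟩
  rw [MonoidHom.range_eq_map, ← hgen, MonoidHom.map_closure, Set.image_pair, hXa, hXb,
    Subgroup.closure_insert_one, Subgroup.zpowers_eq_closure]


open CategoryTheory Finset

/-- The induced character on `⟨a, c⟩`, for `c` central and `G` acting on `⟨a⟩` through `χ`: a rational
multiple of a power of `ψ c` times the period of `(ψ a) ^ i` over the range of `χ`. -/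
theorem inducedCharacter_eq {G : Type} [Group G] [Fintype G] {q : ℕ} {a c : G}
    (hc : ∀ y, y * c * y⁻¹ = c) (χ : G →* (ZMod q)ˣ)
    (hχ : ∀ y, y * a * y⁻¹ = a ^ ((χ y : ZMod q)).val)
    (H : Subgroup (ZMod q)ˣ) [Fintype H] (hH : χ.range = H)
    (X : Subgroup G) (A C : X) (hA : (A : G) = a) (hC : (C : G) = c)
    (ψ : X →* ℂˣ) (i k : ℤ) :
    inducedCharacter X ψ (a ^ i * c ^ k) =
      ((Nat.card X : ℂ)⁻¹ * (Nat.card χ.ker : ℂ)) * ((ψ C : ℂ) ^ k *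
        ∑ t : H, ((ψ A : ℂ) ^ i) ^ (((t : (ZMod q)ˣ) : ZMod q)).val) := by
  classical
  have key : ∀ y : G, y * (a ^ i * c ^ k) * y⁻¹ =
      ((A ^ ((χ y : ZMod q)).val) ^ i * C ^ k : X) := by
    intro y
    have : y * (a ^ i * c ^ k) * y⁻¹ = (y * a ^ i * y⁻¹) * (y * c ^ k * y⁻¹) := by group
    rw [this, ← conj_zpow, ← conj_zpow, hc, hχ]
    simp [hA, hC]
  unfold inducedCharacter
  rw [mul_assoc]
  congr 1
  rw [mul_left_comm, ← sum_comp_hom χ H hH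
    (fun u => ((ψ A : ℂ) ^ i) ^ ((u : ZMod q)).val), Finset.mul_sum]
  refine Finset.sum_congr rfl fun y _ => ?_
  have hm : y * (a ^ i * c ^ k) * y⁻¹ ∈ X := by
    rw [key]; exact Subtype.property _
  have he : (⟨_, hm⟩ : X) = (A ^ ((χ y : ZMod q)).val) ^ i * C ^ k := Subtype.ext (key y)
  rw [dif_pos hm, he]
  simp only [map_mul, map_zpow, map_pow, Units.val_mul, Units.val_zpow_eq_zpow_val,
    Units.val_pow_eq_pow_val]
  rw [mul_comm, ← zpow_natCast, ← zpow_natCast, zpow_comm]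

theorem inducedCharacter_eq_zero {G : Type} [Group G] [Fintype G] (X : Subgroup G) [hX : X.Normal]
    (ψ : X →* ℂˣ) {g : G} (hg : g ∉ X) : inducedCharacter X ψ g = 0 := by
  unfold inducedCharacter
  rw [Finset.sum_eq_zero, mul_zero]
  intro y _
  rw [dif_neg]
  intro h
  have h2 := hX.conj_mem _ h y⁻¹
  rw [show y⁻¹ * (y * g * y⁻¹) * y⁻¹⁻¹ = g by group] at h2
  exact hg h2

theorem exists_zpow_mul_zpow {G : Type*} [Group G] {a c : G} (h : Commute a c)
    {g : G} (hg : g ∈ Subgroup.closure {a, c}) : ∃ i k : ℤ, g = a ^ i * c ^ k := by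
  have hz : ∀ i k : ℤ, Commute (a ^ i) (c ^ k) := fun i k => h.zpow_zpow i k
  induction hg using Subgroup.closure_induction with
  | mem x hx =>
    rcases hx with rfl | rfl
    · exact ⟨1, 0, by simp⟩
    · exact ⟨0, 1, by simp⟩
  | one => exact ⟨0, 0, by simp⟩
  | mul x y _ _ hx hy =>
    obtain ⟨i, k, rfl⟩ := hx
    obtain ⟨i', k', rfl⟩ := hy
    refine ⟨i + i', k + k', ?_⟩
    rw [zpow_add, zpow_add, mul_assoc, mul_assoc, ← mul_assoc (c ^ k), ← (hz i' k).eq, mul_assoc]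
  | inv x _ hx =>
    obtain ⟨i, k, rfl⟩ := hx
    refine ⟨-i, -k, ?_⟩
    rw [mul_inv_rev, zpow_neg, zpow_neg, ← zpow_neg, ← zpow_neg, (hz (-i) (-k)).eq]

theorem IsPrimitiveRoot.mem_subfield_of_pow_eq_one {m : ℕ} [NeZero m] {z w : ℂ} (hz : IsPrimitiveRoot z m)
    (hw : w ^ m = 1) {L : Subfield ℂ} (hL : z ∈ L) : w ∈ L := by
  obtain ⟨k, -, rfl⟩ := hz.eq_pow_of_pow_eq_one hw
  exact pow_mem hL k

/-- Let `p, q` be distinct odd primes, `G = C_q ⋊ C_{p^n}` non-abelian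
(presented by `a, b` with `a^q = b^{p^n} = 1`, `b a b⁻¹ = a^j`, `j` of order `p^r` mod `q`),
and `X = ⟨a, b^{p^r}⟩`.  Let `ψ` be a faithful one-dimensional complex representation of
`X`, `τ = Ind_X^G ψ` (whose character is the induced character of `ψ`), and `F ⊆ ℂ` a
subfield.  Then `F(ψ) = F(ζ_q, ζ_{p^{n-r}})` and `F(τ) = F(ζ_{p^{n-r}}, ∑_{t ∈ H} ζ_q^t)`,
where `H` is the (unique) subgroup of order `p^r` of `(ℤ/qℤ)ˣ`. -/
theorem character_fields_of_induced
    (p q n r : ℕ) (hp : p.Prime) (hq : q.Prime) (hpodd : Odd p) (hqodd : Odd q)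
    (hpq : p ≠ q) (hn : 1 ≤ n) (hr0 : 0 < r) (hrn : r ≤ n) (hrdvd : p ^ r ∣ q - 1)
    (G : Type) [Group G] [Fintype G] (a b : G) (j : ℕ)
    (ha : orderOf a = q) (hb : orderOf b = p ^ n)
    (hba : b * a * b⁻¹ = a ^ j) (hj : orderOf (j : ZMod q) = p ^ r)
    (hgen : Subgroup.closure {a, b} = ⊤)
    (ψ : (Subgroup.closure {a, b ^ p ^ r} : Subgroup G) →* ℂˣ)
    (hψ : Function.Injective ψ)
    (F : Subfield ℂ)
    (ζq ζp : ℂ) (hζq : IsPrimitiveRoot ζq q) (hζp : IsPrimitiveRoot ζp (p ^ (n - r)))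
    [NeZero q] (H : Subgroup (ZMod q)ˣ) [Fintype H] (hH : Nat.card H = p ^ r) :
    Subfield.closure ((F : Set ℂ) ∪
        Set.range (fun x : (Subgroup.closure {a, b ^ p ^ r} : Subgroup G) => ((ψ x : ℂˣ) : ℂ))) =
      Subfield.closure ((F : Set ℂ) ∪ {ζq, ζp}) ∧
    Subfield.closure ((F : Set ℂ) ∪
        Set.range (inducedCharacter (Subgroup.closure {a, b ^ p ^ r}) ψ)) =
      Subfield.closure ((F : Set ℂ) ∪
        {ζp, ∑ t : H, ζq ^ (((t : (ZMod q)ˣ) : ZMod q)).val}) := by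
  classical
  have : Fact q.Prime := ⟨hq⟩
  have : NeZero (p ^ (n - r)) := ⟨pow_ne_zero _ hp.ne_zero⟩
  have hprpos : 0 < p ^ r := pow_pos hp.pos r
  have hunit : IsUnit (j : ZMod q) := (orderOf_pos_iff.1 (hj ▸ hprpos)).isUnit
  obtain ⟨χ, hχ, hrange⟩ := exists_action a b ha hba hunit hgen
  have hrangeH : χ.range = H := by
    rw [hrange]
    apply subgroup_eq_of_card_eq
    rw [hH, Nat.card_zpowers, ← hj, ← orderOf_units, IsUnit.unit_spec]
  have hordc : orderOf (b ^ p ^ r) = p ^ (n - r) := by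
    rw [orderOf_pow_of_dvd hprpos.ne' (hb ▸ pow_dvd_pow p hrn), hb, Nat.pow_div hrn hp.pos]
  have hcb : Commute b (b ^ p ^ r) := (Commute.refl b).pow_right _
  revert ψ
  generalize b ^ p ^ r = c at hordc hcb ⊢
  generalize hXdef : Subgroup.closure {a, c} = X
  intro ψ hψ
  let A : X := ⟨a, hXdef ▸ Subgroup.subset_closure (by simp)⟩
  let C : X := ⟨c, hXdef ▸ Subgroup.subset_closure (by simp)⟩
  have hac : Commute a c := by
    have : A * C = C * A := hψ (by rw [map_mul, map_mul, mul_comm])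
    exact congrArg Subtype.val this
  have hcen : ∀ y, y * c * y⁻¹ = c := by
    have : (⊤ : Subgroup G) ≤ Subgroup.centralizer {c} := by
      rw [← hgen, Subgroup.closure_le]
      rintro x (rfl | rfl)
      · exact Subgroup.mem_centralizer_singleton_iff.2 hac.eq
      · exact Subgroup.mem_centralizer_singleton_iff.2 hcb.eq
    intro y
    rw [Subgroup.mem_centralizer_singleton_iff.1 (this (Subgroup.mem_top y)),
      mul_inv_cancel_right]
  have hform : ∀ g ∈ X, ∃ i k : ℤ, g = a ^ i * c ^ k := fun g hg =>
    exists_zpow_mul_zpow hac (hXdef ▸ hg)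
  have hnormal : X.Normal := by
    refine ⟨fun g hg y => ?_⟩
    obtain ⟨i, k, rfl⟩ := hform g hg
    have : y * (a ^ i * c ^ k) * y⁻¹ = (y * a ^ i * y⁻¹) * (y * c ^ k * y⁻¹) := by group
    rw [this, ← conj_zpow, ← conj_zpow, hcen, hχ]
    exact mul_mem (zpow_mem (pow_mem A.2 _) _) (zpow_mem C.2 _)
  have hα : IsPrimitiveRoot (ψ A : ℂ) q := by
    have : orderOf (ψ A : ℂ) = q := by
      rw [orderOf_units, orderOf_injective ψ hψ, Subgroup.orderOf_mk, ha]
    exact this ▸ IsPrimitiveRoot.orderOf _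
  have hβ : IsPrimitiveRoot (ψ C : ℂ) (p ^ (n - r)) := by
    have : orderOf (ψ C : ℂ) = p ^ (n - r) := by
      rw [orderOf_units, orderOf_injective ψ hψ, Subgroup.orderOf_mk, hordc]
    exact this ▸ IsPrimitiveRoot.orderOf _
  have hval := inducedCharacter_eq hcen χ hχ H hrangeH X A C rfl rfl ψ
  set κ : ℂ := (Nat.card X : ℂ)⁻¹ * (Nat.card χ.ker : ℂ) with hκ
  have hκ0 : κ ≠ 0 := mul_ne_zero (inv_ne_zero (Nat.cast_ne_zero.2 Nat.card_pos.ne'))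
    (Nat.cast_ne_zero.2 Nat.card_pos.ne')
  have hκL : ∀ L : Subfield ℂ, κ ∈ L := fun L =>
    mul_mem (inv_mem (natCast_mem L _)) (natCast_mem L _)
  have hFl : ∀ {S : Set ℂ}, (F : Set ℂ) ⊆ Subfield.closure ((F : Set ℂ) ∪ S) :=
    fun {S} => Set.subset_union_left.trans Subfield.subset_closure
  have hSl : ∀ {S : Set ℂ} {x : ℂ}, x ∈ S → x ∈ Subfield.closure ((F : Set ℂ) ∪ S) :=
    fun h => Subfield.subset_closure (Or.inr h)
  refine ⟨le_antisymm ?_ ?_, le_antisymm ?_ ?_⟩ <;>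
    refine Subfield.closure_le.2 (Set.union_subset hFl ?_)
  · rintro _ ⟨⟨x, hx⟩, rfl⟩
    obtain ⟨i, k, rfl⟩ := hform x hx
    have he : (⟨_, hx⟩ : X) = A ^ i * C ^ k := Subtype.ext (by simp [A, C])
    simp only [he, map_mul, map_zpow, Units.val_mul, Units.val_zpow_eq_zpow_val]
    exact mul_mem (zpow_mem (hζq.mem_subfield_of_pow_eq_one hα.pow_eq_one (hSl (by simp))) _)
      (zpow_mem (hζp.mem_subfield_of_pow_eq_one hβ.pow_eq_one (hSl (by simp))) _)
  · rintro _ (rfl | rfl)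
    · exact hα.mem_subfield_of_pow_eq_one hζq.pow_eq_one (hSl ⟨A, rfl⟩)
    · exact hβ.mem_subfield_of_pow_eq_one hζp.pow_eq_one (hSl ⟨C, rfl⟩)
  · rintro _ ⟨g, rfl⟩
    by_cases hg : g ∈ X
    swap
    · rw [inducedCharacter_eq_zero X ψ hg]
      exact zero_mem _
    obtain ⟨i, k, rfl⟩ := hform g hg
    rw [hval]
    refine mul_mem (hκL _) (mul_mem
      (zpow_mem (hζp.mem_subfield_of_pow_eq_one hβ.pow_eq_one (hSl (by simp))) _) ?_)
    -- If `q ∣ i` the sum over `H` is the rational number `|H|`; otherwise it is a Gaussian period.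
    by_cases h1 : (ψ A : ℂ) ^ i = 1
    · simp only [h1, one_pow]
      exact sum_mem fun _ _ => one_mem _
    · have hpr : IsPrimitiveRoot ((ψ A : ℂ) ^ i) q := by
        have : orderOf ((ψ A : ℂ) ^ i) = q := by
          refine orderOf_eq_prime ?_ h1
          rw [← zpow_natCast, zpow_comm, zpow_natCast, hα.pow_eq_one, one_zpow]
        exact this ▸ IsPrimitiveRoot.orderOf _
      refine Subfield.closure_le.2 ?_ (mem_closure_of_period H hζq hpr)
      rw [Set.singleton_subset_iff]
      exact hSl (by simp)
  · have hv : ∀ i k : ℤ, (ψ C : ℂ) ^ k *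
        ∑ t : H, ((ψ A : ℂ) ^ i) ^ (((t : (ZMod q)ˣ) : ZMod q)).val ∈
        Subfield.closure ((F : Set ℂ) ∪ Set.range (inducedCharacter X ψ)) := by
      intro i k
      have h0 : inducedCharacter X ψ (a ^ i * c ^ k) ∈
          Subfield.closure ((F : Set ℂ) ∪ Set.range (inducedCharacter X ψ)) := hSl ⟨_, rfl⟩
      rw [hval] at h0
      have h1 := mul_mem (inv_mem (hκL _)) h0
      rwa [inv_mul_cancel_left₀ hκ0] at h1
    rintro _ (rfl | rfl)
    · refine hβ.mem_subfield_of_pow_eq_one hζp.pow_eq_one ?_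
      -- The value at `c` is `κ * |H| * β`.
      have h1 := hv 0 1
      simp only [zpow_zero, one_pow, zpow_one, Finset.sum_const, nsmul_eq_mul, mul_one] at h1
      have h2 := mul_mem h1 (inv_mem (natCast_mem _ (Finset.univ : Finset H).card))
      rwa [mul_inv_cancel_right₀] at h2
      exact Nat.cast_ne_zero.2 (Finset.card_ne_zero.2 Finset.univ_nonempty)
    · refine Subfield.closure_le.2 ?_ (mem_closure_of_period H hα hζq)
      rw [Set.singleton_subset_iff]
      have h1 := hv 1 0
      simpa using h1
end

section
/- Let ψ be a faithful 1-dimensional complex representation of X, let τ = Ind_X^G ψ, and let F ⊆ ℂ be a subfield such that the extension F(ψ)/F(τ) of character-value fields has degree p^r. Then τ is realisable over F(τ) if and only if the primitive p^{n−r}-th root of unity ζ_{p^{n−r}} lies in the image of the field norm map N_{F(ψ)/F(τ)} : F(ψ)^× → F(τ)^×. -/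
/-!
Write `d = p ^ r`, `e = p ^ (n - r)`, `k = F(τ)`, `K = F(ψ)`, `ζ = ψ a` and `z = ψ (b ^ d)`, a
primitive `e`-th root of unity. The central value `τ (b ^ d) = d * z` shows `z ∈ k`, so `K = k(ζ)`
is cyclotomic over `k`. Its Galois group embeds in the cyclic group `(ZMod q)ˣ`, which has only one
subgroup of order `d = [K : k]`; hence it is generated by `σ : ζ ↦ ζ ^ j`
(`exists_gal_generator`), and the norm of `x` is `∏ i < d, σ ^ i x`. The values of `τ` vanish on
`a ^ i * b ^ m` for `d ∤ m`, and at `a ^ i * b ^ (d * l)` they are the traces of `ζ ^ i * z ^ l`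
from `K` to `k`.

If `z` is the norm of `x`, then `a ↦ ζ`, `b ↦ x σ` defines a representation of `G` on the
`k`-space `K`, because `(x σ) ^ d` is multiplication by the norm of `x`
(`exists_operators_of_norm`, `IsMetacyclic.exists_hom`); its character is `τ`.

Conversely, let `V` be a representation over `k` with character `τ`. Since the images `A`, `B ^ d`
of `a`, `b ^ d` have finite order in characteristic zero, the traces of their powers force
`A` to be a root of the minimal polynomial of `ζ` and `B ^ d` to be the scalar `z`
(`aeval_minpoly_eq_zero_of_trace`). So `V` is a `K`-line on which `B` is `σ`-semilinear; for
`v ≠ 0` and `B v = x v`, iterating gives `z v = B ^ d v = N(x) v`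
(`exists_norm_of_operators`).

Finally `z` and the given root of unity are powers of each other, so one is a norm if and only if
the other is.
-/

open CategoryTheory Finset

/-! ### The cyclic extension generated by a `q`-th root of unity -/

/-- If `K = k(ζ)` has degree `d` over `k` with `ζ` a primitive `q`-th root of unity, and `j` has order
`d` modulo `q`, then the Galois group is generated by `ζ ↦ ζ ^ j`. The last two conclusions express
the norm and the trace through this generator. -/
theorem exists_gal_generator {k K : Type*} [Field k] [Field K] [Algebra k K]
    [FiniteDimensional k K] {q d j : ℕ} (hq : q.Prime) {ζ : K} (hζ : IsPrimitiveRoot ζ q)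
    (hadj : Algebra.adjoin k {ζ} = ⊤) (hd : Module.finrank k K = d)
    (hj : orderOf (j : ZMod q) = d) :
    ∃ σ : K ≃ₐ[k] K, σ ζ = ζ ^ j ∧ σ ^ d = 1 ∧
      (∀ x, algebraMap k K (Algebra.norm k x) = ∏ i ∈ range d, (σ ^ i) x) ∧
      (∀ x, algebraMap k K (Algebra.trace k K x) = ∑ i ∈ range d, (σ ^ i) x) := by
  classical
  have : Fact q.Prime := ⟨hq⟩
  have : IsCyclotomicExtension {q} k K := by
    rw [IsCyclotomicExtension.iff_singleton]
    refine ⟨⟨ζ, hζ⟩, fun x => ?_⟩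
    have hx : x ∈ Algebra.adjoin k {ζ} := by rw [hadj]; trivial
    exact Algebra.adjoin_mono (by simpa using hζ.pow_eq_one) hx
  have : IsGalois k K := IsCyclotomicExtension.isGalois {q} k K
  have hdpos : 0 < d := hd ▸ Module.finrank_pos
  have hcard : Nat.card (K ≃ₐ[k] K) = d := by rw [IsGalois.card_aut_eq_finrank, hd]
  let f := hζ.autToPow k
  have hf : Function.Injective f := IsPrimitiveRoot.autToPow_injective k hζ
  have hjd : (j : ZMod q) ^ d = 1 := hj ▸ pow_orderOf_eq_one _
  let u : (ZMod q)ˣ := Units.ofPowEqOne _ d hjd hdpos.ne'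
  have hu : (u : ZMod q) = j := rfl
  have huo : orderOf u = d := by rw [← orderOf_units, hu, hj]
  -- the solutions of `y ^ d = 1` in the cyclic group `(ZMod q)ˣ` are exhausted by the image of `f`
  have himg : (univ.image f) = ({y | y ^ d = 1} : Finset (ZMod q)ˣ) := by
    apply Finset.eq_of_subset_of_card_le
    · intro y hy
      obtain ⟨s, -, rfl⟩ := Finset.mem_image.1 hy
      simp only [Finset.mem_filter, Finset.mem_univ, true_and]
      rw [← map_pow, ← hcard, pow_card_eq_one', map_one]
    · rw [Finset.card_image_of_injective _ hf, Finset.card_univ, ← Nat.card_eq_fintype_card, hcard]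
      exact IsCyclic.card_pow_eq_one_le hdpos
  have humem : u ∈ univ.image f := by
    rw [himg]; simp [← huo, pow_orderOf_eq_one]
  obtain ⟨σ, -, hσ⟩ := Finset.mem_image.1 humem
  have hσo : orderOf σ = d := by rw [← orderOf_injective f hf, hσ, huo]
  have hgen : ∀ x, x ∈ Subgroup.zpowers σ := by
    intro x
    have : Subgroup.zpowers σ = ⊤ := by
      apply Subgroup.eq_top_of_card_eq
      rw [Nat.card_zpowers, hσo, hcard]
    rw [this]; trivial
  have hinj : Set.InjOn (fun i => σ ^ i) (range d : Set ℕ) := by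
    have := pow_injOn_Iio_orderOf (x := σ)
    rw [hσo] at this
    simpa using this
  refine ⟨σ, ?_, hσo ▸ pow_orderOf_eq_one σ, fun x => ?_, fun x => ?_⟩
  · rw [← IsPrimitiveRoot.autToPow_spec k hζ σ]
    change ζ ^ ((f σ : (ZMod q)ˣ) : ZMod q).val = _
    rw [hσ, hu, ZMod.val_natCast, hζ.eq_orderOf, pow_mod_orderOf]
  · rw [Algebra.norm_eq_prod_automorphisms, ← IsCyclic.image_range_orderOf hgen, hσo,
      Finset.prod_image hinj]
  · rw [trace_eq_sum_automorphisms, ← IsCyclic.image_range_orderOf hgen, hσo,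
      Finset.sum_image hinj]

/-! ### Traces and minimal polynomials -/

open Polynomial in
/-- An operator `A` of finite order whose powers have the traces `φ (z ^ i)`, for a linear functional
`φ` on a field containing `z`, is annihilated by the minimal polynomial of `z`: the idempotent
projecting onto the other eigenspaces of `A` has trace `φ 0 = 0`. -/
theorem aeval_minpoly_eq_zero_of_trace {k K V : Type*} [Field k] [CharZero k] [Field K]
    [Algebra k K] [AddCommGroup V] [Module k V] [FiniteDimensional k V]
    (A : Module.End k V) (z : K) (φ : K →ₗ[k] k) {N : ℕ} (hN : 0 < N) (hA : A ^ N = 1)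
    (hz : z ^ N = 1) (htr : ∀ i : ℕ, LinearMap.trace k V (A ^ i) = φ (z ^ i)) :
    aeval A (minpoly k z) = 0 := by
  have htr' : ∀ g : k[X], LinearMap.trace k V (aeval A g) = φ (aeval z g) := by
    intro g
    induction g using Polynomial.induction_on' with
    | add g h hg hh => simp [hg, hh]
    | monomial i c => simp [aeval_monomial, ← Algebra.smul_def, htr]
  have hN0 : (N : k) ≠ 0 := by exact_mod_cast hN.ne'
  have hsep : (X ^ N - 1 : k[X]).Separable := by
    simpa using separable_X_pow_sub_C (1 : k) hN0 one_ne_zero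
  obtain ⟨h, hh⟩ := minpoly.dvd k z (p := X ^ N - 1) (by simp [hz])
  rw [hh] at hsep
  obtain ⟨u, w, huw⟩ := hsep.isCoprime
  set f := minpoly k z with hf
  have hfh : aeval A (f * h) = 0 := by rw [← hh]; simp [hA]
  -- `u f` evaluates at `A` to an idempotent of trace zero
  have hidem : IsIdempotentElem (aeval A (u * f)) := by
    have h1 : u * f * (u * f) = u * f - u * w * (f * h) := by linear_combination (u * f) * huw
    rw [IsIdempotentElem, ← map_mul, h1, map_sub, map_mul _ (u * w), hfh, mul_zero, sub_zero]
  have he : aeval A (u * f) = 0 := by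
    rw [← LinearMap.IsIdempotentElem.trace_eq_zero_iff hidem, htr', map_mul, hf, minpoly.aeval,
      mul_zero, map_zero]
  have h2 : f = f * (u * f) + w * (f * h) := by linear_combination (-f) * huw
  rw [h2, map_add, map_mul, he, map_mul _ w, hfh, mul_zero, mul_zero, add_zero]

theorem mul_pow_comm_aux {M : Type*} [Monoid M] {A B : M} {j : ℕ} (h : B * A = A ^ j * B)
    (k i : ℕ) : B ^ k * A ^ i = A ^ (j ^ k * i) * B ^ k := by
  induction k generalizing i with
  | zero => simp
  | succ k ih =>
    have h1 : ∀ i, B * A ^ i = A ^ (j * i) * B := by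
      intro i
      have : SemiconjBy B A (A ^ j) := h
      rw [pow_mul]; exact (this.pow_right i)
    rw [pow_succ, mul_assoc, h1, ← mul_assoc, ih, mul_assoc, pow_succ, mul_assoc]


/-! ### Semilinear operators and norms -/

theorem semilinear_pow {k K M : Type*} [Field k] [Field K] [Algebra k K] [Monoid M]
    (L : K →* M) (σ : K ≃ₐ[k] K) {B : M} (h : ∀ y, B * L y = L (σ y) * B) (m : ℕ) (y : K) :
    B ^ m * L y = L ((σ ^ m) y) * B ^ m := by
  induction m generalizing y with
  | zero => simp
  | succ m ih =>
    rw [pow_succ, mul_assoc, h, ← mul_assoc, ih, mul_assoc, pow_succ, AlgEquiv.mul_apply]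

theorem gal_pow_apply {k K : Type*} [Field k] [Field K] [Algebra k K] {ζ : K} {j : ℕ}
    {σ : K ≃ₐ[k] K} (hσ : σ ζ = ζ ^ j) (m : ℕ) : (σ ^ m) ζ = ζ ^ j ^ m := by
  induction m with
  | zero => simp
  | succ m ih => rw [pow_succ, AlgEquiv.mul_apply, hσ, map_pow, ih, ← pow_mul, pow_succ]

/-- If `A` makes `V` a one-dimensional vector space over `K = k(ζ)` and `B` is `σ`-semilinear with
`B ^ d = z`, then `z` is a norm: it is the norm of `x` whenever `B v = x v` with `v ≠ 0`. -/
theorem exists_norm_of_operators {k K V : Type*} [Field k] [Field K] [Algebra k K]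
    [FiniteDimensional k K] [AddCommGroup V] [Module k V] [FiniteDimensional k V]
    {d j : ℕ} (hd : Module.finrank k K = d) (hdV : Module.finrank k V = d) {ζ : K}
    (hadj : Algebra.adjoin k {ζ} = ⊤) {σ : K ≃ₐ[k] K} (hσ : σ ζ = ζ ^ j)
    (hnorm : ∀ x, algebraMap k K (Algebra.norm k x) = ∏ i ∈ range d, (σ ^ i) x)
    {A B : Module.End k V} (hA : Polynomial.aeval A (minpoly k ζ) = 0)
    (hBA : B * A = A ^ j * B) {z : k} (hB : B ^ d = algebraMap k _ z) :
    ∃ x : K, Algebra.norm k x = z := by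
  have hint : IsIntegral k ζ := IsIntegral.of_finite k ζ
  let pb := PowerBasis.ofAdjoinEqTop hint hadj
  have hgen : pb.gen = ζ := PowerBasis.ofAdjoinEqTop_gen hint hadj
  let Φ : K →ₐ[k] Module.End k V := pb.lift A (by rw [hgen]; exact hA)
  have hΦ : Φ ζ = A := by
    have : Φ pb.gen = A := pb.lift_gen A _
    rwa [hgen] at this
  have hdpos : 0 < Module.finrank k V := by rw [hdV, ← hd]; exact Module.finrank_pos
  have : Nontrivial V := Module.nontrivial_of_finrank_pos hdpos
  obtain ⟨v, hv⟩ := exists_ne (0 : V)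
  have hsemi : ∀ y, B * Φ y = Φ (σ y) * B := by
    intro y
    have hy : y ∈ Algebra.adjoin k {ζ} := by rw [hadj]; trivial
    induction hy using Algebra.adjoin_induction with
    | mem y hy =>
      obtain rfl : y = ζ := hy
      rw [hΦ, hσ, map_pow, hΦ, hBA]
    | algebraMap c =>
      rw [AlgEquiv.commutes, AlgHom.commutes]
      exact (Algebra.commutes c B).symm
    | add x y _ _ hx hy => rw [map_add, map_add, map_add, mul_add, add_mul, hx, hy]
    | mul x y _ _ hx hy =>
      rw [map_mul, map_mul, map_mul, ← mul_assoc, hx, mul_assoc, hy, mul_assoc]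
  -- evaluation at `v` identifies `K` with `V`
  let E : K →ₗ[k] V := (LinearMap.applyₗ v).comp Φ.toLinearMap
  have hE : ∀ y, E y = Φ y v := fun y => rfl
  have hEinj : Function.Injective E := by
    rw [← LinearMap.ker_eq_bot, LinearMap.ker_eq_bot']
    intro y hy
    by_contra hy0
    apply hv
    have : Φ (y⁻¹ * y) v = 0 := by
      rw [map_mul, Module.End.mul_apply, ← hE, hy, map_zero]
    rwa [inv_mul_cancel₀ hy0, map_one] at this
  have hEsurj : Function.Surjective E :=
    (LinearMap.injective_iff_surjective_of_finrank_eq_finrank (by rw [hd, hdV])).1 hEinj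
  obtain ⟨x, hx⟩ := hEsurj (B v)
  have hpow : ∀ m : ℕ, (B ^ m) v = Φ (∏ i ∈ range m, (σ ^ i) x) v := by
    intro m
    induction m with
    | zero => simp
    | succ m ih =>
      have h1 := semilinear_pow (Φ : K →* Module.End k V) σ hsemi m x
      have h2 := congrArg (fun T : Module.End k V => T v) h1
      simp only [MonoidHom.coe_coe, Module.End.mul_apply] at h2
      rw [pow_succ, Module.End.mul_apply, ← hx, hE, h2, ih, prod_range_succ, mul_comm, map_mul,
        Module.End.mul_apply]
  refine ⟨x, (algebraMap k K).injective (hEinj ?_)⟩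
  rw [hnorm, hE, ← hpow, hB, hE, AlgHom.commutes]

/-- For `z` the norm of `x`, the operators on `K` are multiplication by `ζ` and `w ↦ x * σ w`. Cyclicity of the
trace makes it vanish on `σ ^ m`-semilinear words with `σ ^ m ζ ≠ ζ`. -/
theorem exists_operators_of_norm {k K : Type*} [Field k] [Field K] [Algebra k K]
    [FiniteDimensional k K] {q d j : ℕ} (hq : 0 < q) (hj : orderOf (j : ZMod q) = d) {ζ : K}
    (hζ : IsPrimitiveRoot ζ q) {σ : K ≃ₐ[k] K} (hσ : σ ζ = ζ ^ j)
    (hnorm : ∀ x, algebraMap k K (Algebra.norm k x) = ∏ i ∈ range d, (σ ^ i) x)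
    (hσd : σ ^ d = 1) {z : k} {x : K} (hx : Algebra.norm k x = z) :
    ∃ A B : Module.End k K, A ^ q = 1 ∧ B ^ d = algebraMap k _ z ∧ B * A = A ^ j * B ∧
      (∀ i m : ℕ, ¬ d ∣ m → LinearMap.trace k K (A ^ i * B ^ m) = 0) ∧
      (∀ i l : ℕ, LinearMap.trace k K (A ^ i * B ^ (d * l)) =
        Algebra.trace k K (ζ ^ i * algebraMap k K z ^ l)) := by
  let L : K →ₐ[k] Module.End k K := Algebra.lmul k K
  have hL : ∀ y w, L y w = y * w := fun y w => rfl
  let B : Module.End k K := L x * σ.toLinearMap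
  have hB : ∀ w, B w = x * σ w := fun w => rfl
  have hsemi : ∀ y, B * L y = L (σ y) * B := by
    intro y
    ext w
    simp only [Module.End.mul_apply, hL, hB, map_mul]
    ring
  have hpow : ∀ (m : ℕ) (w : K), (B ^ m) w = (∏ i ∈ range m, (σ ^ i) x) * (σ ^ m) w := by
    intro m
    induction m with
    | zero => simp
    | succ m ih =>
      intro w
      rw [pow_succ, Module.End.mul_apply, hB, ih, map_mul, prod_range_succ, pow_succ,
        AlgEquiv.mul_apply, mul_assoc]
  have hBd : B ^ d = algebraMap k _ z := by
    ext w
    rw [hpow, ← hnorm, hσd, hx, Module.algebraMap_end_apply, Algebra.smul_def]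
    rfl
  refine ⟨L ζ, B, ?_, hBd, ?_, ?_, ?_⟩
  · rw [← map_pow, hζ.pow_eq_one, map_one]
  · rw [hsemi, hσ, map_pow]
  · intro i m hm
    have hne : ζ - (σ ^ m) ζ ≠ 0 := by
      rw [gal_pow_apply hσ, sub_ne_zero]
      intro h
      apply hm
      rw [← hj, orderOf_dvd_iff_pow_eq_one]
      have h1 : ζ ^ 1 = ζ ^ j ^ m := by rwa [pow_one]
      rw [← pow_mod_orderOf, ← pow_mod_orderOf ζ (j ^ m), ← hζ.eq_orderOf] at h1
      have h2 : 1 ≡ j ^ m [MOD q] := hζ.pow_inj (Nat.mod_lt _ hq) (Nat.mod_lt _ hq) h1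
      rw [← ZMod.natCast_eq_natCast_iff] at h2
      exact_mod_cast h2.symm
    -- cyclicity of the trace kills every `(ζ - σ ^ m ζ) * y`
    have key : ∀ y, LinearMap.trace k K (L ((ζ - (σ ^ m) ζ) * y) * B ^ m) = 0 := by
      intro y
      have h1 : LinearMap.trace k K (L (ζ * y) * B ^ m) =
          LinearMap.trace k K (L ((σ ^ m) ζ * y) * B ^ m) := by
        rw [map_mul L, mul_assoc, LinearMap.trace_mul_comm, mul_assoc,
          show B ^ m * L ζ = L ((σ ^ m) ζ) * B ^ m from
            semilinear_pow (L : K →* Module.End k K) σ hsemi m ζ, ← mul_assoc, mul_comm _ y,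
          map_mul L]
      rw [sub_mul, map_sub, sub_mul, map_sub, h1, sub_self]
    have := key ((ζ - (σ ^ m) ζ)⁻¹ * ζ ^ i)
    rwa [mul_inv_cancel_left₀ hne, map_pow] at this
  · intro i l
    rw [pow_mul, hBd, ← L.commutes, ← map_pow, ← map_pow, ← map_mul]
    rfl
/-! ### The metacyclic group -/

/-- `G` is generated by `a` of prime order `q` and `b` of order `d * e` prime to `q`, where `b`
acts on `⟨a⟩` by raising to the `j`-th power and this action has order `d`. -/
structure IsMetacyclic {G : Type*} [Group G] (a b : G) (q d e j : ℕ) : Prop where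
  prime : q.Prime
  hd : 0 < d
  he : 0 < e
  coprime : q.Coprime (d * e)
  ha : orderOf a = q
  hb : orderOf b = d * e
  rel : b * a = a ^ j * b
  hj : orderOf (j : ZMod q) = d
  gen : Subgroup.closure {a, b} = ⊤

namespace IsMetacyclic

variable {G : Type*} [Group G] {a b : G} {q d e j : ℕ}

theorem exists_eq (H : IsMetacyclic a b q d e j) [Finite G] (g : G) :
    ∃ i k : ℕ, g = a ^ i * b ^ k := by
  have hg : g ∈ Subgroup.closure {a, b} := by rw [H.gen]; trivial
  rw [← Subgroup.mem_toSubmonoid, Subgroup.closure_toSubmonoid_of_finite] at hg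
  induction hg using Submonoid.closure_induction with
  | mem x hx =>
    rcases hx with rfl | rfl
    · exact ⟨1, 0, by simp⟩
    · exact ⟨0, 1, by simp⟩
  | one => exact ⟨0, 0, by simp⟩
  | mul x y _ _ hx hy =>
    obtain ⟨i, k, rfl⟩ := hx
    obtain ⟨i', k', rfl⟩ := hy
    refine ⟨i + j ^ k * i', k + k', ?_⟩
    rw [mul_assoc, ← mul_assoc (b ^ k), mul_pow_comm_aux H.rel, pow_add, pow_add]
    simp only [mul_assoc]

/-- Uniqueness of the normal form: `⟨a⟩` and `⟨b⟩` have coprime orders, hence meet trivially. -/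
theorem modEq (H : IsMetacyclic a b q d e j) {i i' k k' : ℕ}
    (h : a ^ i * b ^ k = a ^ i' * b ^ k') : i ≡ i' [MOD q] ∧ k ≡ k' [MOD d * e] := by
  have hdis : Disjoint (Subgroup.zpowers a) (Subgroup.zpowers b) := by
    apply Subgroup.disjoint_of_coprime_natCard
    rw [Nat.card_zpowers, Nat.card_zpowers, H.ha, H.hb]; exact H.coprime
  have h1 : (a ^ i')⁻¹ * a ^ i = b ^ k' * (b ^ k)⁻¹ := by
    rw [inv_mul_eq_iff_eq_mul, ← mul_assoc, ← h, mul_inv_cancel_right]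
  have ha1 : (a ^ i')⁻¹ * a ^ i ∈ Subgroup.zpowers a :=
    mul_mem (inv_mem (Subgroup.npow_mem_zpowers a i')) (Subgroup.npow_mem_zpowers a i)
  have hb1 : (a ^ i')⁻¹ * a ^ i ∈ Subgroup.zpowers b := by
    rw [h1]
    exact mul_mem (Subgroup.npow_mem_zpowers b k') (inv_mem (Subgroup.npow_mem_zpowers b k))
  have h2 := Subgroup.disjoint_def.1 hdis ha1 hb1
  have h3 : a ^ i = a ^ i' := by rwa [inv_mul_eq_one, eq_comm] at h2
  have h4 : b ^ k = b ^ k' := by rwa [h3, mul_right_inj] at h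
  rw [pow_eq_pow_iff_modEq] at h3 h4
  exact ⟨H.ha ▸ h3, H.hb ▸ h4⟩

/-- Von Dyck's theorem for `G`: elements of a monoid satisfying the defining relations of `G` are the
images of `a` and `b` under a homomorphism. -/
theorem exists_hom (H : IsMetacyclic a b q d e j) [Finite G] {M : Type*} [Monoid M] {A B : M}
    (hA : A ^ q = 1) (hB : B ^ (d * e) = 1) (hBA : B * A = A ^ j * B) :
    ∃ ρ : G →* M, ∀ i k : ℕ, ρ (a ^ i * b ^ k) = A ^ i * B ^ k := by
  choose I K hIK using H.exists_eq
  have key : ∀ i k : ℕ, A ^ I (a ^ i * b ^ k) * B ^ K (a ^ i * b ^ k) = A ^ i * B ^ k := by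
    intro i k
    obtain ⟨h1, h2⟩ := H.modEq (hIK (a ^ i * b ^ k))
    rw [pow_eq_pow_mod i hA, h1, ← pow_eq_pow_mod _ hA, pow_eq_pow_mod k hB, h2,
      ← pow_eq_pow_mod _ hB]
  refine ⟨⟨⟨fun g => A ^ I g * B ^ K g, ?_⟩, ?_⟩, key⟩
  · simpa using key 0 0
  · intro g h
    have h1 : g * h = a ^ (I g + j ^ K g * I h) * b ^ (K g + K h) := by
      conv_lhs => rw [hIK g, hIK h]
      rw [mul_assoc, ← mul_assoc (b ^ _), mul_pow_comm_aux H.rel, pow_add, pow_add]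
      simp only [mul_assoc]
    change A ^ I (g * h) * B ^ K (g * h) = _
    rw [h1, key, mul_assoc, ← mul_assoc (B ^ K g), mul_pow_comm_aux hBA, pow_add, pow_add]
    simp only [mul_assoc]

theorem sum_eq (H : IsMetacyclic a b q d e j) [Fintype G] (f : G → ℂ) :
    ∑ x, f x = ∑ s ∈ range q, ∑ t ∈ range (d * e), f (a ^ s * b ^ t) := by
  rw [← Finset.sum_product']
  symm
  refine Finset.sum_bij (fun x _ => a ^ x.1 * b ^ x.2) (fun _ _ => mem_univ _) ?_ ?_
    (fun _ _ => rfl)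
  · rintro ⟨s, t⟩ h ⟨s', t'⟩ h' heq
    simp only [mem_product, Finset.mem_range] at h h'
    obtain ⟨h1, h2⟩ := H.modEq heq
    rw [Nat.ModEq, Nat.mod_eq_of_lt h.1, Nat.mod_eq_of_lt h'.1] at h1
    rw [Nat.ModEq, Nat.mod_eq_of_lt h.2, Nat.mod_eq_of_lt h'.2] at h2
    rw [h1, h2]
  · intro g _
    obtain ⟨i, k, rfl⟩ := H.exists_eq g
    refine ⟨(i % q, k % (d * e)), ?_, ?_⟩
    · simp only [mem_product, Finset.mem_range]
      exact ⟨Nat.mod_lt _ H.prime.pos, Nat.mod_lt _ (Nat.mul_pos H.hd H.he)⟩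
    · simp only [← H.ha, ← H.hb, pow_mod_orderOf]

theorem commute_iff (H : IsMetacyclic a b q d e j) (k : ℕ) :
    a * b ^ k = b ^ k * a ↔ d ∣ k := by
  have h1 := mul_pow_comm_aux H.rel k 1
  rw [pow_one, mul_one] at h1
  rw [h1, mul_left_inj, ← H.hj, orderOf_dvd_iff_pow_eq_one]
  conv_lhs => lhs; rw [← pow_one a]
  rw [pow_eq_pow_iff_modEq, H.ha, ← ZMod.natCast_eq_natCast_iff]
  push_cast
  exact eq_comm

/-- The subgroup centralises `a`, and `b ^ k` commutes with `a` only for `d ∣ k`. -/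
theorem dvd_of_mem (H : IsMetacyclic a b q d e j) {i k : ℕ}
    (h : a ^ i * b ^ k ∈ Subgroup.closure {a, b ^ d}) : d ∣ k := by
  have hle : Subgroup.closure {a, b ^ d} ≤ Subgroup.centralizer {a} := by
    rw [Subgroup.closure_le]
    rintro x (rfl | rfl)
    · exact Subgroup.mem_centralizer_iff.2 (by simp)
    · refine Subgroup.mem_centralizer_iff.2 ?_
      rintro _ rfl
      exact (H.commute_iff d).2 dvd_rfl
  have h1 := Subgroup.mem_centralizer_iff.1 (hle h) a rfl
  rw [← H.commute_iff]
  rw [← mul_assoc, ← pow_succ', pow_succ, mul_assoc, mul_assoc, mul_right_inj] at h1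
  exact h1

/-- The subgroup is cyclic, generated by `a * b ^ d`. -/
theorem card_closure (H : IsMetacyclic a b q d e j) :
    Nat.card (Subgroup.closure {a, b ^ d}) = q * e := by
  have hbo : orderOf (b ^ d) = e := by
    rw [orderOf_pow_of_dvd H.hd.ne' (H.hb ▸ dvd_mul_right d e), H.hb,
      Nat.mul_div_cancel_left _ H.hd]
  have hcop : q.Coprime e := H.coprime.coprime_mul_left_right
  have hcomm : Commute a (b ^ d) := (H.commute_iff d).2 dvd_rfl
  have hco : orderOf (a * b ^ d) = q * e := by
    rw [hcomm.orderOf_mul_eq_mul_orderOf_of_coprime (by rwa [H.ha, hbo]), H.ha, hbo]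
  have : Subgroup.closure {a, b ^ d} = Subgroup.zpowers (a * b ^ d) := by
    apply le_antisymm
    · rw [Subgroup.closure_le]
      have haz : a ∈ Subgroup.zpowers (a * b ^ d) := by
        obtain ⟨m, hm⟩ := exists_pow_eq_self_of_coprime (x := a) (n := e) (by rw [H.ha]; exact hcop.symm)
        have : (a * b ^ d) ^ e = a ^ e := by
          have h1 := pow_orderOf_eq_one (b ^ d)
          rw [hbo] at h1
          rw [hcomm.mul_pow, h1, mul_one]
        have h2 := (Subgroup.zpowers (a * b ^ d)).pow_mem
          (Subgroup.npow_mem_zpowers (a * b ^ d) e) m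
        rwa [this, hm] at h2
      rintro x (rfl | rfl)
      · exact haz
      · have := (Subgroup.zpowers (a * b ^ d)).mul_mem (inv_mem haz)
          (Subgroup.mem_zpowers (a * b ^ d))
        rwa [inv_mul_cancel_left] at this
    · rw [Subgroup.zpowers_le]
      exact (Subgroup.closure {a, b ^ d}).mul_mem (Subgroup.subset_closure (by simp))
        (Subgroup.subset_closure (by simp))
  rw [this, Nat.card_zpowers, hco]

end IsMetacyclic

/-! ### The induced character -/

theorem sum_range_mul_of_periodic (f : ℕ → ℂ) (d e : ℕ) (h : ∀ t, f (t + d) = f t) :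
    ∑ t ∈ range (d * e), f t = e * ∑ t ∈ range d, f t := by
  have hp : ∀ m t, f (d * m + t) = f t := by
    intro m t
    induction m with
    | zero => simp
    | succ m ih => rw [← ih, ← h (d * m + t)]; congr 1; ring
  induction e with
  | zero => simp
  | succ e ih =>
    rw [mul_add, mul_one, Finset.sum_range_add, ih]
    simp only [hp]
    push_cast; ring

section

variable {G : Type} [Group G] [Fintype G] {a b : G} {q d e j : ℕ}

theorem inducedCharacter_of_not_dvd (H : IsMetacyclic a b q d e j)
    (ψ : (Subgroup.closure {a, b ^ d} : Subgroup G) →* ℂˣ) {i k : ℕ} (hk : ¬ d ∣ k) :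
    inducedCharacter _ ψ (a ^ i * b ^ k) = 0 := by
  unfold inducedCharacter
  rw [Finset.sum_eq_zero, mul_zero]
  intro x _
  rw [dif_neg]
  intro hx
  obtain ⟨s, t, rfl⟩ := H.exists_eq x
  obtain ⟨i', k', h⟩ := H.exists_eq (a ^ s * b ^ t * (a ^ i * b ^ k) * (a ^ s * b ^ t)⁻¹)
  rw [h] at hx
  rw [mul_inv_eq_iff_eq_mul] at h
  have h1 : ∀ s t i k, a ^ s * b ^ t * (a ^ i * b ^ k) = a ^ (s + j ^ t * i) * b ^ (t + k) := by
    intro s t i k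
    rw [mul_assoc, ← mul_assoc (b ^ t), mul_pow_comm_aux H.rel, pow_add, pow_add]
    simp only [mul_assoc]
  rw [h1, h1] at h
  have h2 := (H.modEq h).2
  rw [add_comm t k] at h2
  have h3 : k ≡ k' [MOD d] := (Nat.ModEq.add_right_cancel' t h2).of_mul_right e
  exact hk ((h3.dvd_iff dvd_rfl).2 (H.dvd_of_mem hx))

theorem inducedCharacter_of_dvd (H : IsMetacyclic a b q d e j)
    (ψ : (Subgroup.closure {a, b ^ d} : Subgroup G) →* ℂˣ) {ζ z : ℂ}
    (hζ : ζ = (ψ ⟨a, Subgroup.subset_closure (by simp)⟩ : ℂˣ))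
    (hz : z = (ψ ⟨b ^ d, Subgroup.subset_closure (by simp)⟩ : ℂˣ)) (i l : ℕ) :
    inducedCharacter _ ψ (a ^ i * b ^ (d * l)) = ∑ t ∈ range d, ζ ^ (j ^ t * i) * z ^ l := by
  have ham : a ∈ Subgroup.closure {a, b ^ d} := Subgroup.subset_closure (by simp)
  have hbm : b ^ d ∈ Subgroup.closure {a, b ^ d} := Subgroup.subset_closure (by simp)
  have hcomm : Commute a (b ^ d) := (H.commute_iff d).2 dvd_rfl
  have hval : ∀ (m l : ℕ) (h : a ^ m * b ^ (d * l) ∈ Subgroup.closure {a, b ^ d}),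
      ((ψ ⟨a ^ m * b ^ (d * l), h⟩ : ℂˣ) : ℂ) = ζ ^ m * z ^ l := by
    intro m l h
    have : (⟨a ^ m * b ^ (d * l), h⟩ : Subgroup.closure {a, b ^ d}) =
        ⟨a, ham⟩ ^ m * ⟨b ^ d, hbm⟩ ^ l := by
      ext; simp [pow_mul]
    rw [this, map_mul, map_pow, map_pow, hζ, hz]
    push_cast; rfl
  have hconj : ∀ s t : ℕ, a ^ s * b ^ t * (a ^ i * b ^ (d * l)) * (a ^ s * b ^ t)⁻¹ =
      a ^ (j ^ t * i) * b ^ (d * l) := by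
    intro s t
    rw [mul_inv_eq_iff_eq_mul, mul_assoc, ← mul_assoc (b ^ t), mul_pow_comm_aux H.rel]
    have h1 : Commute (a ^ s) (b ^ (d * l)) := by
      rw [pow_mul]; exact hcomm.pow_pow s l
    calc a ^ s * (a ^ (j ^ t * i) * b ^ t * b ^ (d * l))
        = a ^ s * a ^ (j ^ t * i) * (b ^ t * b ^ (d * l)) := by simp only [mul_assoc]
      _ = a ^ (j ^ t * i) * a ^ s * (b ^ (d * l) * b ^ t) := by
        rw [(Commute.refl a).pow_pow s _ |>.eq, (Commute.refl b).pow_pow t _ |>.eq]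
      _ = a ^ (j ^ t * i) * (a ^ s * b ^ (d * l)) * b ^ t := by simp only [mul_assoc]
      _ = _ := by rw [h1.eq]; simp only [mul_assoc]
  have hζq : ζ ^ q = 1 := by
    have h1 : (⟨a, ham⟩ : Subgroup.closure {a, b ^ d}) ^ q = 1 := by
      ext; simp [← H.ha, pow_orderOf_eq_one]
    rw [hζ, ← Units.val_pow_eq_pow_val, ← map_pow, h1]; simp
  have hper : ∀ t, ζ ^ (j ^ (t + d) * i) * z ^ l = ζ ^ (j ^ t * i) * z ^ l := by
    intro t
    have : j ^ (t + d) * i ≡ j ^ t * i [MOD q] := by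
      rw [← ZMod.natCast_eq_natCast_iff]
      push_cast
      rw [pow_add, ← H.hj, pow_orderOf_eq_one, mul_one]
    rw [pow_eq_pow_mod _ hζq, this, ← pow_eq_pow_mod _ hζq]
  have hmem : ∀ m, a ^ m * b ^ (d * l) ∈ Subgroup.closure {a, b ^ d} := fun m => by
    rw [pow_mul]; exact mul_mem (pow_mem ham m) (pow_mem hbm l)
  unfold inducedCharacter
  rw [H.sum_eq, H.card_closure]
  simp only [hconj, hmem, dite_true, hval]
  rw [sum_range_mul_of_periodic _ d e hper, Finset.sum_const, card_range, nsmul_eq_mul, ← mul_assoc,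
    ← mul_assoc]
  have hq0 : (q : ℂ) ≠ 0 := by exact_mod_cast H.prime.ne_zero
  have he0 : (e : ℂ) ≠ 0 := by exact_mod_cast H.he.ne'
  push_cast
  rw [mul_assoc _ (q : ℂ), inv_mul_cancel₀ (mul_ne_zero hq0 he0), one_mul]

end

/-! ### The norm criterion -/

/-- The criterion over abstract fields, for the character values that `τ` takes. -/
theorem realisable_iff_norm_aux {G : Type} [Group G] [Fintype G] {a b : G} {q d e j : ℕ}
    (H : IsMetacyclic a b q d e j) {k K : Type} [Field k] [CharZero k] [Field K] [Algebra k K]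
    {ζ : K} (hζ : IsPrimitiveRoot ζ q) (hadj : Algebra.adjoin k {ζ} = ⊤) {z : k}
    (hz : z ^ e = 1) (hd : Module.finrank k K = d) :
    (∃ R : FDRep k G, (∀ i m : ℕ, ¬ d ∣ m → R.character (a ^ i * b ^ m) = 0) ∧
      ∀ i l : ℕ, algebraMap k K (R.character (a ^ i * b ^ (d * l))) =
        ∑ t ∈ range d, ζ ^ (j ^ t * i) * algebraMap k K z ^ l) ↔
    ∃ x : K, Algebra.norm k x = z := by
  have : FiniteDimensional k K := Module.finite_of_finrank_pos (hd ▸ H.hd)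
  obtain ⟨σ, hσ, hσd, hnorm, htrace⟩ := exists_gal_generator H.prime hζ hadj hd H.hj
  have htr : ∀ i l : ℕ, algebraMap k K (Algebra.trace k K (ζ ^ i * algebraMap k K z ^ l)) =
      ∑ t ∈ range d, ζ ^ (j ^ t * i) * algebraMap k K z ^ l := by
    intro i l
    rw [htrace]
    refine Finset.sum_congr rfl fun t _ => ?_
    rw [map_mul, map_pow, map_pow, gal_pow_apply hσ, AlgEquiv.commutes, ← pow_mul]
  constructor
  · rintro ⟨R, -, hR⟩
    have hch : ∀ g, R.character g = LinearMap.trace k R (R.ρ g) := fun g => rfl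
    have hA1 : R.ρ a ^ q = 1 := by rw [← map_pow, ← H.ha, pow_orderOf_eq_one, map_one]
    have hC1 : (R.ρ b ^ d) ^ e = 1 := by
      rw [← pow_mul, ← map_pow, ← H.hb, pow_orderOf_eq_one, map_one]
    have hrank : Module.finrank k R = d := by
      have h1 := hR 0 0
      rw [mul_zero, pow_zero, pow_zero, mul_one, hch, map_one, LinearMap.trace_one] at h1
      have h2 : algebraMap k K (Module.finrank k R : k) = algebraMap k K (d : k) := by
        rw [h1]; simp
      exact_mod_cast (algebraMap k K).injective h2
    have hA : Polynomial.aeval (R.ρ a) (minpoly k ζ) = 0 := by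
      refine aeval_minpoly_eq_zero_of_trace _ ζ (Algebra.trace k K) H.prime.pos hA1
        hζ.pow_eq_one fun i => (algebraMap k K).injective ?_
      have h1 := hR i 0
      rw [← htr, hch, mul_zero, pow_zero, mul_one, map_pow, pow_zero, mul_one] at h1
      exact h1
    have hC : Polynomial.aeval (R.ρ b ^ d) (minpoly k z) = 0 := by
      refine aeval_minpoly_eq_zero_of_trace _ z ((d : k) • LinearMap.id) H.he hC1 hz
        fun i => (algebraMap k K).injective ?_
      have h1 := hR 0 i
      rw [hch, pow_zero, one_mul, map_pow, pow_mul] at h1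
      rw [h1]
      simp
    have hC' : R.ρ b ^ d = algebraMap k _ z := by
      rw [minpoly.eq_X_sub_C', map_sub, Polynomial.aeval_X, Polynomial.aeval_C, sub_eq_zero] at hC
      exact hC
    refine exists_norm_of_operators hd hrank hadj hσ hnorm hA ?_ hC'
    rw [← map_mul, H.rel, map_mul, map_pow]
  · rintro ⟨x, hx⟩
    obtain ⟨A, B, hA, hB, hBA, h0, h1⟩ :=
      exists_operators_of_norm H.prime.pos H.hj hζ hσ hnorm hσd hx
    have hBN : B ^ (d * e) = 1 := by rw [pow_mul, hB, ← map_pow, hz, map_one]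
    obtain ⟨ρ, hρ⟩ := H.exists_hom hA hBN hBA
    have hch : ∀ g, (FDRep.of ρ).character g = LinearMap.trace k K (ρ g) := fun g => rfl
    refine ⟨FDRep.of ρ, fun i m hm => ?_, fun i l => ?_⟩
    · rw [hch, hρ, h0 i m hm]
    · rw [hch, hρ, h1, htr]

/-- Let `p, q` be distinct odd primes, `G = C_q ⋊ C_{p^n}` non-abelian
(presented by `a, b` with `a^q = b^{p^n} = 1`, `b a b⁻¹ = a^j`, `j` of order `p^r` mod `q`),
and `X = ⟨a, b^{p^r}⟩`.  Let `ψ` be a faithful one-dimensional complex representation of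
`X`, `τ = Ind_X^G ψ` (whose character is the induced character of `ψ`), and `F ⊆ ℂ` a
subfield such that `[F(ψ) : F(τ)] = p^r`.  Then `τ` is realisable over `F(τ)` (i.e. some
representation of `G` over `F(τ)` has character mapping to the character of `τ`, so its
complexification is isomorphic to `τ`) if and only if `ζ_{p^{n-r}}` lies in the image of
the norm map `N_{F(ψ)/F(τ)}`. -/
theorem realisable_iff_norm
    (p q n r : ℕ) (hp : p.Prime) (hq : q.Prime) (hpodd : Odd p) (hqodd : Odd q)
    (hpq : p ≠ q) (hn : 1 ≤ n) (hr0 : 0 < r) (hrn : r ≤ n) (hrdvd : p ^ r ∣ q - 1)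
    (G : Type) [Group G] [Fintype G] (a b : G) (j : ℕ)
    (ha : orderOf a = q) (hb : orderOf b = p ^ n)
    (hba : b * a * b⁻¹ = a ^ j) (hj : orderOf (j : ZMod q) = p ^ r)
    (hgen : Subgroup.closure {a, b} = ⊤)
    (ψ : (Subgroup.closure {a, b ^ p ^ r} : Subgroup G) →* ℂˣ)
    (hψ : Function.Injective ψ)
    (ζp : ℂ) (hζp : IsPrimitiveRoot ζp (p ^ (n - r)))
    (F : Subfield ℂ) (Eψ Eτ : Subfield ℂ)
    -- `Eψ = F(ψ)`, the field generated over `F` by the values of `ψ`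
    (hEψ : Eψ = Subfield.closure ((F : Set ℂ) ∪
      Set.range (fun x : (Subgroup.closure {a, b ^ p ^ r} : Subgroup G) => ((ψ x : ℂˣ) : ℂ))))
    -- `Eτ = F(τ)`, the field generated over `F` by the values of the character of `τ`
    (hEτ : Eτ = Subfield.closure ((F : Set ℂ) ∪
      Set.range (inducedCharacter (Subgroup.closure {a, b ^ p ^ r}) ψ)))
    (hle : Eτ ≤ Eψ) :
    letI : Algebra Eτ Eψ := (Subfield.inclusion hle).toAlgebra
    -- assuming `[F(ψ) : F(τ)] = p^r` …
    Module.finrank Eτ Eψ = p ^ r →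
      -- … `τ` is realisable over `F(τ)` iff `ζ_{p^{n-r}}` is a norm from `F(ψ)`
      ((∃ σ : FDRep Eτ G, ∀ g : G,
          algebraMap Eτ ℂ (σ.character g) =
            inducedCharacter (Subgroup.closure {a, b ^ p ^ r}) ψ g) ↔
        ∃ x : Eψ, ((Algebra.norm Eτ x : Eτ) : ℂ) = ζp) := by
  intro hfin
  let alg : Algebra Eτ Eψ := (Subfield.inclusion hle).toAlgebra
  -- numerical data of the metacyclic group
  have hN : p ^ r * p ^ (n - r) = p ^ n := by rw [← pow_add, Nat.add_sub_cancel' hrn]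
  have H : IsMetacyclic a b q (p ^ r) (p ^ (n - r)) j :=
    { prime := hq
      hd := pow_pos hp.pos r
      he := pow_pos hp.pos _
      coprime := by
        rw [hN]
        exact Nat.Coprime.pow_right n ((Nat.coprime_primes hq hp).2 hpq.symm)
      ha := ha
      hb := by rw [hb, hN]
      rel := by rw [← hba, inv_mul_cancel_right]
      hj := hj
      gen := hgen }
  have ham : a ∈ Subgroup.closure {a, b ^ p ^ r} := Subgroup.subset_closure (by simp)
  have hbm : b ^ p ^ r ∈ Subgroup.closure {a, b ^ p ^ r} := Subgroup.subset_closure (by simp)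
  obtain ⟨ζ, hζdef⟩ : ∃ ζ : ℂ, ζ = (ψ ⟨a, ham⟩ : ℂˣ) := ⟨_, rfl⟩
  obtain ⟨z, hzdef⟩ : ∃ z : ℂ, z = (ψ ⟨b ^ p ^ r, hbm⟩ : ℂˣ) := ⟨_, rfl⟩
  have hinj : Function.Injective ((Units.coeHom ℂ).comp ψ) :=
    Units.val_injective.comp hψ
  have hζ : IsPrimitiveRoot ζ q := by
    have h1 : orderOf (⟨a, ham⟩ : Subgroup.closure {a, b ^ p ^ r}) = q := by rw [← ha]; exact Subgroup.orderOf_mk a ham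
    have h2 := orderOf_injective _ hinj ⟨a, ham⟩
    rw [h1] at h2
    rw [hζdef, ← h2]
    exact IsPrimitiveRoot.orderOf _
  have hz : IsPrimitiveRoot z (p ^ (n - r)) := by
    have h1 : orderOf (⟨b ^ p ^ r, hbm⟩ : Subgroup.closure {a, b ^ p ^ r}) = p ^ (n - r) := by
      rw [Subgroup.orderOf_mk, orderOf_pow_of_dvd H.hd.ne' (H.hb ▸ dvd_mul_right _ _), H.hb,
        Nat.mul_div_cancel_left _ H.hd]
    have h2 := orderOf_injective _ hinj ⟨b ^ p ^ r, hbm⟩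
    rw [h1] at h2
    rw [hzdef, ← h2]
    exact IsPrimitiveRoot.orderOf _
  have hτ0 : ∀ i m : ℕ, ¬ p ^ r ∣ m → inducedCharacter _ ψ (a ^ i * b ^ m) = 0 :=
    fun i m hm => inducedCharacter_of_not_dvd H ψ hm
  have hτ1 : ∀ i l : ℕ, inducedCharacter _ ψ (a ^ i * b ^ (p ^ r * l)) =
      ∑ t ∈ range (p ^ r), ζ ^ (j ^ t * i) * z ^ l :=
    fun i l => inducedCharacter_of_dvd H ψ hζdef hzdef i l
  have hp0 : (p : ℂ) ≠ 0 := by exact_mod_cast hp.ne_zero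
  -- `z` is a character value of `τ` up to the rational factor `p ^ r`
  have hzτ : z ∈ Eτ := by
    have h1 := hτ1 0 1
    simp only [mul_zero, pow_zero, one_mul, pow_one, mul_one, sum_const, card_range, nsmul_eq_mul]
      at h1
    have h2 : z = ((p ^ r : ℕ) : ℂ)⁻¹ * inducedCharacter _ ψ (b ^ p ^ r) := by
      rw [h1, inv_mul_cancel_left₀]
      push_cast
      exact pow_ne_zero _ hp0
    rw [h2]
    refine mul_mem (inv_mem (natCast_mem Eτ _)) ?_
    rw [hEτ]
    exact Subfield.subset_closure (Or.inr ⟨_, rfl⟩)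
  have hζψ : ζ ∈ Eψ := by
    rw [hEψ, hζdef]
    exact Subfield.subset_closure (Or.inr ⟨_, rfl⟩)
  have : FiniteDimensional Eτ Eψ := Module.finite_of_finrank_pos (hfin ▸ H.hd)
  have hadj : Algebra.adjoin Eτ {(⟨ζ, hζψ⟩ : Eψ)} = ⊤ := by
    apply Algebra.adjoin_eq_top_of_primitive_element (Algebra.IsAlgebraic.isAlgebraic _)
    set L := IntermediateField.adjoin Eτ {(⟨ζ, hζψ⟩ : Eψ)} with hL
    have hEL : Eψ ≤ L.toSubfield.map Eψ.subtype := by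
      have hτL : ∀ y : Eτ, (y : ℂ) ∈ L.toSubfield.map Eψ.subtype := fun y =>
        Subfield.mem_map.2 ⟨algebraMap Eτ Eψ y, L.algebraMap_mem y, rfl⟩
      have hζL : ζ ∈ L.toSubfield.map Eψ.subtype :=
        Subfield.mem_map.2 ⟨⟨ζ, hζψ⟩, IntermediateField.mem_adjoin_simple_self _ _, rfl⟩
      nth_rewrite 1 [hEψ]
      rw [Subfield.closure_le]
      rintro y (hy | ⟨⟨x, hx⟩, rfl⟩)
      · have : y ∈ Eτ := by rw [hEτ]; exact Subfield.subset_closure (Or.inl hy)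
        exact hτL ⟨y, this⟩
      · obtain ⟨i, k, rfl⟩ := H.exists_eq x
        obtain ⟨l, rfl⟩ := H.dvd_of_mem hx
        have h1 : (⟨a ^ i * b ^ (p ^ r * l), hx⟩ : Subgroup.closure {a, b ^ p ^ r}) = ⟨a, ham⟩ ^ i * ⟨b ^ p ^ r, hbm⟩ ^ l := by
          ext; simp [pow_mul]
        have h2 : ((ψ ⟨a ^ i * b ^ (p ^ r * l), hx⟩ : ℂˣ) : ℂ) = ζ ^ i * z ^ l := by
          rw [h1, map_mul, map_pow, map_pow, hζdef, hzdef]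
          push_cast; rfl
        change ((ψ ⟨a ^ i * b ^ (p ^ r * l), hx⟩ : ℂˣ) : ℂ) ∈ _
        rw [h2]
        exact mul_mem (pow_mem hζL i) (pow_mem (hτL ⟨z, hzτ⟩) l)
    rw [eq_top_iff]
    intro y _
    obtain ⟨y', hy', h⟩ := Subfield.mem_map.1 (hEL y.2)
    rw [Subtype.val_injective h] at hy'
    exact hy'
  have hζ' : IsPrimitiveRoot (⟨ζ, hζψ⟩ : Eψ) q :=
    IsPrimitiveRoot.of_map_of_injective (f := Eψ.subtype) hζ Subtype.val_injective
  have hz' : (⟨z, hzτ⟩ : Eτ) ^ p ^ (n - r) = 1 := Subtype.ext (by simpa using hz.pow_eq_one)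
  have main := realisable_iff_norm_aux H hζ' hadj hz' hfin
  have hL : (∃ σ : FDRep Eτ G, ∀ g : G,
      algebraMap Eτ ℂ (σ.character g) = inducedCharacter _ ψ g) ↔
      ∃ R : FDRep Eτ G, (∀ i m : ℕ, ¬ p ^ r ∣ m → R.character (a ^ i * b ^ m) = 0) ∧
        ∀ i l : ℕ, algebraMap Eτ Eψ (R.character (a ^ i * b ^ (p ^ r * l))) =
          ∑ t ∈ range (p ^ r), (⟨ζ, hζψ⟩ : Eψ) ^ (j ^ t * i) *
            algebraMap Eτ Eψ ⟨z, hzτ⟩ ^ l := by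
    have hsum : ∀ i l : ℕ, ((∑ t ∈ range (p ^ r), (⟨ζ, hζψ⟩ : Eψ) ^ (j ^ t * i) *
        algebraMap Eτ Eψ ⟨z, hzτ⟩ ^ l : Eψ) : ℂ) = ∑ t ∈ range (p ^ r), ζ ^ (j ^ t * i) * z ^ l := by
      intro i l
      push_cast
      rfl
    refine exists_congr fun R => ⟨fun h => ⟨fun i m hm => ?_, fun i l => ?_⟩, ?_⟩
    · have h1 := h (a ^ i * b ^ m)
      rw [hτ0 i m hm] at h1
      exact Subtype.ext h1
    · apply Subtype.ext
      rw [hsum, ← hτ1]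
      exact h _
    · rintro ⟨h0, h1⟩ g
      obtain ⟨i, m, rfl⟩ := H.exists_eq g
      by_cases hm : p ^ r ∣ m
      · obtain ⟨l, rfl⟩ := hm
        rw [hτ1, ← hsum, ← h1]
        rfl
      · rw [hτ0 i m hm, h0 i m hm, map_zero]
  rw [hL, main]
  have : NeZero (p ^ (n - r)) := ⟨H.he.ne'⟩
  -- `z` and `ζp` are powers of one another, so one is a norm exactly when the other is
  constructor
  · rintro ⟨x, hx⟩
    obtain ⟨i, -, hi⟩ := hz.eq_pow_of_pow_eq_one hζp.pow_eq_one
    refine ⟨x ^ i, ?_⟩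
    rw [map_pow, hx, ← hi]
    rfl
  · rintro ⟨x, hx⟩
    obtain ⟨i, -, hi⟩ := hζp.eq_pow_of_pow_eq_one hz.pow_eq_one
    refine ⟨x ^ i, Subtype.ext ?_⟩
    rw [map_pow]
    push_cast
    rw [hx, hi]
end

section
/- Let ℓ be a prime with ℓ ≠ q, let K be an algebraically closed field of characteristic 0 containing the ℓ-adic field ℚ_ℓ, and let τ be a faithful irreducible representation of G over K. Then τ is realisable over the subfield ℚ_ℓ(τ) of K generated over ℚ_ℓ by the values of the character of τ; in other words, the local Schur index of τ at ℓ is 1. -/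
/-!
In a suitable basis `τ` is explicit: `a` acts as `diag(ζ ^ (j ^ i))`, `i < d = p ^ r`, with `ζ` a
primitive `q`-th root of unity, and `b` acts as a cyclic permutation matrix with one entry replaced by
the scalar `ω` of the central element `b ^ d` (`exists_matrix_form`). Let `F = ℚ_ℓ(τ)`; it contains
`ω`, as `d ω` is the trace of `b ^ d`, and it lies in a cyclotomic field `ℚ_ℓ(θ)`.

Since `ℓ ≠ q`, the representation is defined over an extension `M = F(ε)` with `ε` a root of unity of
order `N` prime to `ℓ`. Such an extension is cyclic (`exists_generator`), and a good choice of `N`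
makes `[M : F]` divisible by `p ^ n` (`dvd_of_pow_eq_one`). A generator `σ` of its Galois group fixes
`τ b` and the character of `τ`, so it sends `ζ` to some `ζ ^ (j ^ i)`; hence a power of `b` conjugates
`τ` into its twist by `σ`. That power is fixed by `σ` and, because `p ^ n` divides `[M : F]`, its
`[M : F]`-th power is `1`: it is a cocycle for the cyclic group, and semilinear Galois descent
(`descent`) yields a form of `τ` over `F`.

The arithmetic input is the action of `Gal(E / ℚ_ℓ)` on roots of unity of order prime to `ℓ`, for `E`
algebraic over `ℚ_ℓ`: every automorphism acts as some `ε ↦ ε ^ (ℓ ^ i)` (`apply_eq_pow_prime_pow`),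
and `ε ↦ ε ^ ℓ` occurs (`exists_frobenius`). Both follow by reduction modulo the maximal ideal of the
ring of integers for the spectral norm.
-/

open CategoryTheory Finset

/-! ### Roots of unity over `ℚ_ℓ` -/

open Polynomial in
/-- The ring of integers `O` of an algebraic extension `E` of `ℚ_ℓ` and its maximal ideal `I`, that
is the closed and open unit balls of the spectral norm. Uniqueness of the extended norm makes both
stable under all `ℚ_ℓ`-automorphisms of `E`. -/
theorem exists_reduction (ℓ : ℕ) [Fact ℓ.Prime] (E : Type) [Field E] [Algebra ℚ_[ℓ] E]
    [Algebra.IsAlgebraic ℚ_[ℓ] E] :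
    ∃ (O : Subring E) (I : Ideal O), I.IsMaximal ∧ (ℓ : O) ∈ I ∧
      (∀ x : ℤ_[ℓ], algebraMap ℚ_[ℓ] E x ∈ O) ∧
      (∀ x : E, ∀ n : ℕ, n ≠ 0 → x ^ n = 1 → x ∈ O) ∧
      (∀ φ : E ≃ₐ[ℚ_[ℓ]] E, ∀ x : O, ∃ h : φ x ∈ O, x ∈ I → (⟨φ x, h⟩ : O) ∈ I) := by
  set v := spectralMulAlgNorm ℚ_[ℓ] E with hv
  have hna : ∀ x y, v (x + y) ≤ max (v x) (v y) := fun x y => by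
    rw [hv, spectralMulAlgNorm_def, spectralMulAlgNorm_def, spectralMulAlgNorm_def]
    exact isNonarchimedean_spectralNorm x y
  have hext : ∀ x : ℚ_[ℓ], v (algebraMap _ E x) = ‖x‖ := fun x => by
    rw [hv, spectralMulAlgNorm_def]; exact spectralNorm_extends x
  have hφ : ∀ (φ : E ≃ₐ[ℚ_[ℓ]] E) x, v (φ x) = v x := fun φ x => by
    rw [hv, spectralMulAlgNorm_def, spectralMulAlgNorm_def]
    exact (spectralNorm_eq_of_equiv φ x).symm
  let O : Subring E :=
    { carrier := {x | v x ≤ 1}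
      mul_mem' := fun {x y} hx hy => by
        simp only [Set.mem_ofPred_eq, map_mul] at *
        exact mul_le_one₀ hx (apply_nonneg _ _) hy
      one_mem' := by simp
      add_mem' := fun {x y} hx hy => (hna x y).trans (max_le hx hy)
      zero_mem' := by simp
      neg_mem' := fun {x} hx => by simpa using hx }
  let I : Ideal O :=
    { carrier := {x | v x < 1}
      add_mem' := fun {x y} hx hy => (hna x y).trans_lt (max_lt hx hy)
      zero_mem' := by simp
      smul_mem' := fun c x hx => by
        simp only [Set.mem_ofPred_eq, smul_eq_mul, Subring.coe_mul, map_mul] at *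
        exact mul_lt_one_of_nonneg_of_lt_one_right c.2 (apply_nonneg _ _) hx }
  refine ⟨O, I, ?_, ?_, ?_, ?_, ?_⟩
  · rw [Ideal.isMaximal_iff]
    refine ⟨?_, ?_⟩
    · intro h
      have : v (1 : E) < 1 := h
      simp at this
    · intro J x _ hxI hxJ
      have hx1 : v x = 1 := le_antisymm x.2 (not_lt.mp hxI)
      have hx0 : (x : E) ≠ 0 := by
        intro h
        rw [h] at hx1
        simp at hx1
      have hinv : v (x : E)⁻¹ ≤ 1 := by
        have : v (x : E) * v (x : E)⁻¹ = 1 := by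
          rw [← map_mul, mul_inv_cancel₀ hx0, map_one]
        rw [hx1, one_mul] at this
        exact this.le
      have : (1 : O) = ⟨(x : E)⁻¹, hinv⟩ * x := by
        ext; simp [hx0]
      rw [this]
      exact J.mul_mem_left _ hxJ
  · change v ((ℓ : O) : E) < 1
    have : ((ℓ : O) : E) = algebraMap ℚ_[ℓ] E ℓ := by simp
    rw [this, hext]
    exact Padic.norm_p_lt_one
  · intro x
    change v _ ≤ 1
    rw [hext]
    exact x.2
  · intro x n hn hx
    change v x ≤ 1
    have : v x ^ n = 1 := by rw [← map_pow, hx, map_one]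
    exact ((pow_eq_one_iff_of_nonneg (apply_nonneg _ _) hn).mp this).le
  · intro φ x
    exact ⟨(hφ φ x).trans_le x.2, fun h => (hφ φ x).trans_lt h⟩

/-- Reduction is injective on `N`-th roots of unity when `N` is nonzero in the residue field. -/
theorem pow_eq_one_injOn {E κ : Type} [Field E] [Field κ] (O : Subring E) (π : O →+* κ) (N : ℕ)
    (hN : (N : κ) ≠ 0) (x y : O) (hx : x ^ N = 1) (hy : y ^ N = 1) (h : π x = π y) : x = y := by
  have hN0 : N ≠ 0 := by rintro rfl; simp at hN
  set z := x * y ^ (N - 1) with hz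
  have hyy : y ^ (N - 1) * y = 1 := by
    rw [← pow_succ, Nat.sub_add_cancel (Nat.pos_of_ne_zero hN0), hy]
  have hz1 : π z = 1 := by
    rw [hz, map_mul, h, ← map_mul, mul_comm, hyy, map_one]
  have hzN : z ^ N = 1 := by rw [hz, mul_pow, hx, ← pow_mul, mul_comm (N - 1), pow_mul, hy]; simp
  have hz2 : z = 1 := by
    by_contra hne
    have h0 : (z - 1) * ∑ i ∈ range N, z ^ i = 0 := by rw [mul_geom_sum, hzN, sub_self]
    have h1 : ∑ i ∈ range N, z ^ i = 0 := (mul_eq_zero.mp h0).resolve_left (sub_ne_zero.mpr hne)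
    have := congrArg π h1
    simp [hz1] at this
    exact hN this
  calc x = z * y := by rw [hz, mul_assoc, hyy, mul_one]
    _ = y := by rw [hz2, one_mul]

open Polynomial in
/-- Every `ℚ_ℓ`-automorphism acts on roots of unity of order prime to `ℓ` as a power of the
Frobenius `ε ↦ ε ^ ℓ`. The product of the `X - x ^ (ℓ ^ i)` over the Frobenius orbit of the residue
`x` of `ε` lifts to an integer polynomial `H`; its value at `ε` reduces to zero, hence so does its
value at `φ ε`, and the residue of `φ ε` lies in that orbit. -/
theorem apply_eq_pow_prime_pow (ℓ : ℕ) [Fact ℓ.Prime] (E : Type) [Field E] [Algebra ℚ_[ℓ] E]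
    [Algebra.IsAlgebraic ℚ_[ℓ] E] (N : ℕ) (hN : N ≠ 0) (hNℓ : ℓ.Coprime N) (ε : E) (hε : ε ^ N = 1)
    (φ : E ≃ₐ[ℚ_[ℓ]] E) : ∃ i : ℕ, φ ε = ε ^ (ℓ ^ i) := by
  obtain ⟨O, I, hI, hℓI, -, hroot, hφ⟩ := exists_reduction ℓ E
  let : Field (O ⧸ I) := Ideal.Quotient.field I
  set π := Ideal.Quotient.mk I with hπ
  have hℓ : ((ℓ : ℕ) : O ⧸ I) = 0 := by
    rw [← map_natCast π]; exact Ideal.Quotient.eq_zero_iff_mem.mpr hℓI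
  have : CharP (O ⧸ I) ℓ :=
    (CharP.charP_iff_prime_eq_zero ‹Fact ℓ.Prime›.out).mpr hℓ
  have hNκ : ((N : ℕ) : O ⧸ I) ≠ 0 := by
    rw [Ne, CharP.cast_eq_zero_iff (O ⧸ I) ℓ]
    intro h
    exact ‹Fact ℓ.Prime›.out.one_lt.ne' (Nat.eq_one_of_dvd_coprimes hNℓ dvd_rfl h)
  have hφε : (φ ε) ^ N = 1 := by rw [← map_pow, hε, map_one]
  let e : O := ⟨ε, hroot ε N hN hε⟩
  let e' : O := ⟨φ ε, hroot _ N hN hφε⟩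
  have heN : e ^ N = 1 := Subtype.ext (by simpa [e] using hε)
  have heN' : e' ^ N = 1 := Subtype.ext (by simpa [e'] using hφε)
  set f := N.totient with hf
  have hf0 : 0 < f := Nat.totient_pos.mpr (Nat.pos_of_ne_zero hN)
  have hef : e ^ (ℓ ^ f) = e := by
    have h1 : ℓ ^ f ≡ 1 [MOD N] := Nat.ModEq.pow_totient hNℓ
    rw [← pow_mod_orderOf, (h1.of_dvd (orderOf_dvd_of_pow_eq_one heN)), pow_mod_orderOf, pow_one]
  set x := π e with hx
  -- the product over the Frobenius orbit of `x` has coefficients in the prime field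
  let h : (O ⧸ I)[X] := ∏ i ∈ range f, (X - C (x ^ (ℓ ^ i)))
  have hfrob : h.map (frobenius (O ⧸ I) ℓ) = h := by
    have h1 : h.map (frobenius (O ⧸ I) ℓ) = ∏ i ∈ range f, (X - C (x ^ (ℓ ^ (i + 1)))) := by
      simp only [h, Polynomial.map_prod, Polynomial.map_sub, map_X, map_C, frobenius_def,
        ← pow_mul, ← pow_succ]
    rw [h1]
    have h2 := prod_range_succ' (fun i => (X - C (x ^ (ℓ ^ i)))) f
    rw [prod_range_succ] at h2
    have h3 : x ^ (ℓ ^ f) = x ^ (ℓ ^ 0) := by rw [hx, ← map_pow, hef]; simp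
    rw [h3] at h2
    exact (mul_right_cancel₀ (X_sub_C_ne_zero _) h2).symm
  have hlift : h ∈ lifts (Int.castRingHom (O ⧸ I)) := by
    rw [lifts_iff_coeff_lifts]
    intro n
    have h1 : (h.coeff n) ^ ℓ = h.coeff n := by
      conv_rhs => rw [← hfrob]
      rw [coeff_map, frobenius_def]
    rw [← Subfield.mem_bot_iff_pow_eq_self, mem_bot_iff_intCast ℓ] at h1
    exact h1
  obtain ⟨H, hH⟩ := (mem_lifts _).mp hlift
  have heval : ∀ y : O, π (aeval y H) = h.eval (π y) := by
    intro y
    rw [← hH, Polynomial.eval_map, aeval_def, hom_eval₂]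
    congr 1
  have h0 : aeval e H ∈ I := by
    rw [← Ideal.Quotient.eq_zero_iff_mem, ← hπ, heval]
    simp only [h, eval_prod]
    refine prod_eq_zero (mem_range.mpr hf0) ?_
    simp [hx]
  obtain ⟨hm, hI'⟩ := hφ φ (aeval e H)
  have h1 : aeval e' H ∈ I := by
    have : (⟨φ (aeval e H : O), hm⟩ : O) = aeval e' H := by
      apply Subtype.ext
      have c1 : ((aeval e H : O) : E) = aeval ε H := (aeval_algHom_apply O.subtype.toIntAlgHom e H).symm
      have c2 : ((aeval e' H : O) : E) = aeval (φ ε) H :=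
        (aeval_algHom_apply O.subtype.toIntAlgHom e' H).symm
      rw [c2]
      change φ ((aeval e H : O) : E) = _
      rw [c1]
      exact (aeval_algHom_apply (φ : E →+* E).toIntAlgHom ε H).symm
    rw [← this]
    exact hI' h0
  rw [← Ideal.Quotient.eq_zero_iff_mem, ← hπ, heval] at h1
  simp only [h, eval_prod, prod_eq_zero_iff] at h1
  obtain ⟨i, -, hi⟩ := h1
  refine ⟨i, ?_⟩
  have h2 : π e' = π (e ^ (ℓ ^ i)) := by
    rw [map_pow]
    simpa [sub_eq_zero] using hi
  have h3 := pow_eq_one_injOn O π N hNκ _ _ heN' (by rw [← pow_mul, mul_comm, pow_mul, heN, one_pow])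
    h2
  exact congrArg Subtype.val h3

open Polynomial in
/-- A root of unity `ε` of order prime to `ℓ` is conjugate over `ℚ_ℓ` to `ε ^ ℓ`. If the minimal
polynomial `f` over `ℤ_ℓ` and its cofactor `g` in `X ^ N - 1` satisfy `g(ε ^ ℓ) = 0`, then modulo `I`
the polynomial `X ^ N - 1` has a double root, as `f(ε ^ ℓ)` reduces to `f(ε) ^ ℓ = 0`; this is
impossible for `N` prime to `ℓ`. -/
theorem exists_frobenius (ℓ : ℕ) [Fact ℓ.Prime] (E : Type) [Field E] [Algebra ℚ_[ℓ] E]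
    [Normal ℚ_[ℓ] E] (N : ℕ) (hN : N ≠ 0) (hNℓ : ℓ.Coprime N) (ε : E) (hε : ε ^ N = 1) :
    ∃ φ : E ≃ₐ[ℚ_[ℓ]] E, φ ε = ε ^ ℓ := by
  obtain ⟨O, I, hI, hℓI, hint, hroot, -⟩ := exists_reduction ℓ E
  let : Field (O ⧸ I) := Ideal.Quotient.field I
  set π := Ideal.Quotient.mk I with hπ
  have hℓ : ((ℓ : ℕ) : O ⧸ I) = 0 := by
    rw [← map_natCast π]; exact Ideal.Quotient.eq_zero_iff_mem.mpr hℓI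
  have : CharP (O ⧸ I) ℓ :=
    (CharP.charP_iff_prime_eq_zero ‹Fact ℓ.Prime›.out).mpr hℓ
  have hNκ : ((N : ℕ) : O ⧸ I) ≠ 0 := by
    rw [Ne, CharP.cast_eq_zero_iff (O ⧸ I) ℓ]
    intro h
    exact ‹Fact ℓ.Prime›.out.one_lt.ne' (Nat.eq_one_of_dvd_coprimes hNℓ dvd_rfl h)
  let j : ℤ_[ℓ] →+* E := (algebraMap ℚ_[ℓ] E).comp (algebraMap ℤ_[ℓ] ℚ_[ℓ])
  let : Algebra ℤ_[ℓ] E := j.toAlgebra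
  have : IsScalarTower ℤ_[ℓ] ℚ_[ℓ] E := IsScalarTower.of_algebraMap_eq fun _ => rfl
  have : FaithfulSMul ℤ_[ℓ] E := (faithfulSMul_iff_algebraMap_injective _ _).mpr
    ((algebraMap ℚ_[ℓ] E).injective.comp (IsFractionRing.injective ℤ_[ℓ] ℚ_[ℓ]))
  let jO : ℤ_[ℓ] →+* O := j.codRestrict O hint
  let e : O := ⟨ε, hroot ε N hN hε⟩
  have heN : e ^ N = 1 := Subtype.ext (by simpa [e] using hε)
  have hεi : IsIntegral ℤ_[ℓ] ε :=
    IsIntegral.of_pow (Nat.pos_of_ne_zero hN) (by rw [hε]; exact isIntegral_one)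
  set f := minpoly ℤ_[ℓ] ε with hf
  have hfmap := minpoly.isIntegrallyClosed_eq_field_fractions' ℚ_[ℓ] hεi
  have hcoe : ∀ (y : O) (P : ℤ_[ℓ][X]), ((P.eval₂ jO y : O) : E) = aeval (y : E) P := by
    intro y P
    have := hom_eval₂ P jO O.subtype y
    exact this
  have hfe : f.eval₂ jO e = 0 := Subtype.ext (by rw [hcoe]; exact minpoly.aeval _ _)
  have hfix : (frobenius (O ⧸ I) ℓ).comp (π.comp jO) = π.comp jO := by
    ext c
    obtain ⟨n, -, hn⟩ := PadicInt.exists_mem_range c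
    rw [PadicInt.maximalIdeal_eq_span_p, Ideal.mem_span_singleton] at hn
    obtain ⟨d, hd⟩ := hn
    have hc : π (jO c) = (n : O ⧸ I) := by
      have : c = n + ℓ * d := by rw [← hd]; ring
      rw [this]
      simp
    rw [RingHom.comp_apply, RingHom.comp_apply, hc, map_natCast]
  have hfx : f.eval₂ (π.comp jO) (π (e ^ ℓ)) = 0 := by
    have h1 : f.eval₂ (π.comp jO) (π e) = 0 := by rw [← hom_eval₂, hfe, map_zero]
    have h2 := hom_eval₂ f (π.comp jO) (frobenius (O ⧸ I) ℓ) (π e)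
    rw [h1, map_zero, hfix, frobenius_def, ← map_pow] at h2
    exact h2.symm
  obtain ⟨g, hg⟩ : f ∣ X ^ N - 1 :=
    minpoly.isIntegrallyClosed_dvd hεi (by simp [hε])
  have hmul : aeval (ε ^ ℓ) f * aeval (ε ^ ℓ) g = 0 := by
    rw [← map_mul, ← hg]
    simp [← pow_mul, mul_comm ℓ N, pow_mul ε N, hε]
  have hzero : aeval (ε ^ ℓ) f = 0 := by
    refine (mul_eq_zero.mp hmul).resolve_right fun hg0 => ?_
    have hge : g.eval₂ jO (e ^ ℓ) = 0 := Subtype.ext (by rw [hcoe]; exact hg0)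
    have hgx : g.eval₂ (π.comp jO) (π (e ^ ℓ)) = 0 := by rw [← hom_eval₂, hge, map_zero]
    have h3 := congrArg (fun P : ℤ_[ℓ][X] => (derivative P).eval₂ (π.comp jO) (π (e ^ ℓ))) hg
    simp only [derivative_mul, eval₂_add, eval₂_mul, hfx, hgx, mul_zero, zero_mul, add_zero,
      derivative_sub, derivative_one, sub_zero, derivative_X_pow, eval₂_pow, eval₂_X,
      map_natCast, eval₂_natCast] at h3
    refine hNκ ((mul_eq_zero.mp h3).resolve_right (pow_ne_zero _ ?_))
    intro h4
    have h5 : π ((e ^ ℓ) ^ N) = 0 := by rw [map_pow, h4, zero_pow hN]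
    rw [← pow_mul, mul_comm, pow_mul, heN, one_pow, map_one] at h5
    exact one_ne_zero h5
  have hconj : minpoly ℚ_[ℓ] ε = minpoly ℚ_[ℓ] (ε ^ ℓ) := by
    have hε' : IsIntegral ℚ_[ℓ] ε := hεi.tower_top
    refine minpoly.eq_of_irreducible_of_monic (minpoly.irreducible hε') ?_ (minpoly.monic hε')
    rw [hfmap, aeval_map_algebraMap]
    exact hzero
  exact isConjRoot_iff_exists_algEquiv.mp (show IsConjRoot ℚ_[ℓ] (ε ^ ℓ) ε from hconj.symm)

theorem pow_eq_pow_iff_cast {M : Type} [Field M] {ζ : M} {N : ℕ} (hN : N ≠ 0)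
    (hζ : IsPrimitiveRoot ζ N) (x y : ℕ) : ζ ^ x = ζ ^ y ↔ (x : ZMod N) = y := by
  have h0 : IsOfFinOrder ζ :=
    isOfFinOrder_iff_pow_eq_one.mpr ⟨N, Nat.pos_of_ne_zero hN, hζ.pow_eq_one⟩
  rw [h0.pow_eq_pow_iff_modEq, ← hζ.eq_orderOf, ZMod.natCast_eq_natCast_iff]

/-- For `N` prime to `ℓ`, the extension of `F` by the `N`-th roots of unity is cyclic: its Galois group
embeds into the subgroup of `(ZMod N)ˣ` generated by `ℓ`. -/
theorem exists_generator (ℓ : ℕ) [Fact ℓ.Prime] (F M : Type) [Field F] [Field M]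
    [Algebra ℚ_[ℓ] F] [Algebra F M] [Algebra ℚ_[ℓ] M] [IsScalarTower ℚ_[ℓ] F M]
    [Algebra.IsAlgebraic ℚ_[ℓ] M] (N : ℕ) [NeZero N] (hNℓ : ℓ.Coprime N)
    [IsCyclotomicExtension {N} F M] (ε : M) (hε : IsPrimitiveRoot ε N) :
    ∃ σ : M ≃ₐ[F] M, ∀ g, g ∈ Subgroup.zpowers σ := by
  let u : (ZMod N)ˣ := ZMod.unitOfCoprime ℓ hNℓ
  have hmem : ∀ g, hε.autToPow F g ∈ Subgroup.zpowers u := by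
    intro g
    obtain ⟨i, hi⟩ := apply_eq_pow_prime_pow ℓ M N (NeZero.ne N) hNℓ ε hε.pow_eq_one
      (g.restrictScalars ℚ_[ℓ])
    have h1 : g ε = ε ^ (ℓ ^ i) := hi
    rw [← hε.autToPow_spec F g] at h1
    have h2 := (pow_eq_pow_iff_cast (NeZero.ne N) hε _ _).mp h1
    rw [ZMod.natCast_zmod_val] at h2
    refine ⟨i, Units.ext ?_⟩
    rw [h2]
    simp [u]
  have hcyc : IsCyclic (M ≃ₐ[F] M) :=
    isCyclic_of_injective ((hε.autToPow F).codRestrict (Subgroup.zpowers u) hmem) (by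
      intro g h hgh
      exact hε.autToPow_injective F (congrArg Subtype.val hgh))
  exact hcyc.exists_generator

/-- The exponent of `Gal(F(ε) / F)` is divisible by `s` when `ε` is a root of unity of order divisible
by `ℓ ^ (φ(m) s) - 1` and `F ⊆ ℚ_ℓ(θ)` with `θ` of order `m`. The `φ(m)`-th power of a Frobenius lift
fixes `θ`, hence `F`, and raises `ε` to the power `ℓ ^ φ(m)`, so its order on `ε` is divisible
by `s`. -/
theorem dvd_of_pow_eq_one (ℓ : ℕ) [Fact ℓ.Prime] (F M E : Type) [Field F] [Field M] [Field E]
    [Algebra ℚ_[ℓ] F] [Algebra ℚ_[ℓ] E] [Algebra F M] [Algebra F E] [Algebra M E]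
    [IsScalarTower ℚ_[ℓ] F E] [IsScalarTower F M E] [Normal F M] [Normal ℚ_[ℓ] E]
    (N m s D : ℕ) (hN : N ≠ 0) (hm : m ≠ 0) (hNℓ : ℓ.Coprime N)
    (hdvd : ℓ ^ (m.totient * s) - 1 ∣ N)
    (ε : M) (hε : IsPrimitiveRoot ε N) (θ : E) (hθ : IsPrimitiveRoot θ m)
    (hF : ∀ x : F, algebraMap F E x ∈ IntermediateField.adjoin ℚ_[ℓ] {θ})
    (hD : ∀ g : M ≃ₐ[F] M, g ^ D = 1) : s ∣ D := by
  have hℓ : 1 < ℓ := (Fact.out : ℓ.Prime).one_lt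
  set t := m.totient with ht
  have ht0 : 0 < t := Nat.totient_pos.mpr (Nat.pos_of_ne_zero hm)
  have : NeZero m := ⟨hm⟩
  obtain ⟨φ, hφ⟩ := exists_frobenius ℓ E N hN hNℓ (algebraMap M E ε)
    (by rw [← map_pow, hε.pow_eq_one, map_one])
  have hφpow : ∀ k : ℕ, (φ ^ k) (algebraMap M E ε) = (algebraMap M E ε) ^ (ℓ ^ k) := by
    intro k
    induction k with
    | zero => simp
    | succ k ih => rw [pow_succ', AlgEquiv.mul_apply, ih, map_pow, hφ, ← pow_mul, pow_succ']
  have hψθ : (φ ^ t) θ = θ := by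
    rw [← hθ.autToPow_spec ℚ_[ℓ] (φ ^ t), map_pow, ht, ← ZMod.card_units_eq_totient,
      pow_card_eq_one]
    conv_rhs => rw [← pow_one θ]
    rw [pow_eq_pow_iff_cast hm hθ, ZMod.natCast_zmod_val, Nat.cast_one, Units.val_one]
  have hψF : ∀ x : F, (φ ^ t) (algebraMap F E x) = algebraMap F E x := by
    intro x
    have h1 : IntermediateField.adjoin ℚ_[ℓ] {θ} ≤
        IntermediateField.fixedField (Subgroup.zpowers (φ ^ t)) := by
      rw [IntermediateField.adjoin_le_iff, Set.singleton_subset_iff]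
      rintro ⟨g, hg⟩
      have hle : Subgroup.zpowers (φ ^ t) ≤ MulAction.stabilizer (E ≃ₐ[ℚ_[ℓ]] E) θ := by
        rw [Subgroup.zpowers_le]; exact hψθ
      exact hle hg
    exact h1 (hF x) ⟨φ ^ t, Subgroup.mem_zpowers _⟩
  let ψ : E ≃ₐ[F] E := AlgEquiv.ofRingEquiv (f := (φ ^ t).toRingEquiv) hψF
  let g : M ≃ₐ[F] M := ψ.restrictNormal M
  have hg : g ε = ε ^ (ℓ ^ t) := by
    apply (algebraMap M E).injective
    rw [map_pow, ← hφpow t]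
    exact ψ.restrictNormal_commutes M ε
  have hgpow : ∀ k : ℕ, (g ^ k) ε = ε ^ (ℓ ^ (t * k)) := by
    intro k
    induction k with
    | zero => simp
    | succ k ih =>
      rw [pow_succ', AlgEquiv.mul_apply, ih, map_pow, hg, ← pow_mul, ← pow_add]; ring_nf
  have h1 := hgpow D
  rw [hD, AlgEquiv.one_apply] at h1
  have h2 : ℓ ^ (t * D) ≡ 1 [MOD N] := by
    rw [← ZMod.natCast_eq_natCast_iff, ← pow_eq_pow_iff_cast hN hε, pow_one]
    exact h1.symm
  have h3 : ℓ ^ (t * s) - 1 ∣ ℓ ^ (t * D) - 1 :=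
    hdvd.trans ((Nat.modEq_iff_dvd' (Nat.one_le_pow _ _ (by omega))).mp h2.symm)
  have h4 := Nat.pow_sub_one_gcd_pow_sub_one ℓ (t * s) (t * D)
  rw [Nat.gcd_eq_left h3] at h4
  have h5 : t * s = Nat.gcd (t * s) (t * D) := by
    have hpos : ∀ k, 1 ≤ ℓ ^ k := fun k => Nat.one_le_pow _ _ (by omega)
    refine Nat.pow_right_injective hℓ ?_
    have := hpos (t * s); have := hpos ((t * s).gcd (t * D))
    change ℓ ^ (t * s) = ℓ ^ ((t * s).gcd (t * D))
    omega
  exact Nat.dvd_of_mul_dvd_mul_left ht0 (h5 ▸ Nat.gcd_dvd_right _ _)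

/-! ### Semilinear descent -/

/-- A matrix representation whose values on a generating set have coefficients in a subfield has all
its values there. -/
theorem exists_lift_hom {G M K ι : Type} [Group G] [Finite G] [Field M] [Field K] [Fintype ι]
    [DecidableEq ι] (f : M →+* K) (R : G →* Matrix ι ι K) (S : Set G)
    (hS : Subgroup.closure S = ⊤) (h : ∀ g ∈ S, ∃ X : Matrix ι ι M, f.mapMatrix X = R g) :
    ∃ ρ : G →* Matrix ι ι M, ∀ g, f.mapMatrix (ρ g) = R g := by
  have hall : ∀ g, ∃ X : Matrix ι ι M, f.mapMatrix X = R g := by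
    intro g
    have hg : g ∈ Subgroup.closure S := by rw [hS]; trivial
    induction hg using Subgroup.closure_induction with
    | mem x hx => exact h x hx
    | one => exact ⟨1, by simp⟩
    | mul x y _ _ hx hy =>
      obtain ⟨X, hX⟩ := hx
      obtain ⟨Y, hY⟩ := hy
      exact ⟨X * Y, by rw [map_mul, map_mul, hX, hY]⟩
    | inv x _ hx =>
      obtain ⟨X, hX⟩ := hx
      refine ⟨X ^ (orderOf x - 1), ?_⟩
      rw [map_pow, hX, ← map_pow]
      congr 1
      rw [eq_inv_iff_mul_eq_one, ← pow_succ, Nat.sub_add_cancel (orderOf_pos x), pow_orderOf_eq_one]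
  have hinj : Function.Injective (f.mapMatrix : Matrix ι ι M →+* Matrix ι ι K) :=
    Matrix.map_injective f.injective
  choose ρ hρ using hall
  exact ⟨{ toFun := ρ
           map_one' := hinj (by rw [hρ, map_one, map_one])
           map_mul' := fun x y => hinj (by rw [hρ, map_mul, map_mul, hρ, hρ]) }, hρ⟩

/-- The vectors fixed by the semilinear map `v ↦ P σ(v)` span `M ^ ι`. The twisted traces
`∑ₖ Pᵏ σᵏ(v)` are fixed, and a linear form `u` vanishing on all of them gives, for each `w`, a linear
relation `∑ₖ u(Pᵏ σᵏ(w)) σᵏ = 0` between the distinct automorphisms `σᵏ`. -/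
theorem span_descent {F M ι : Type} [Field F] [Field M] [Algebra F M] [Fintype ι] [DecidableEq ι]
    (σ : M ≃ₐ[F] M) (D : ℕ) (hD : D = orderOf σ) (hD0 : 0 < D) (P : Matrix ι ι M)
    (hP : σ.toRingEquiv.toRingHom.mapMatrix P = P) (hPD : P ^ D = 1) :
    Submodule.span M {v : ι → M | P.mulVec (σ ∘ v) = v} = ⊤ := by
  -- `T v = ∑ Pᵏ σᵏ(v)` is the trace of the twisted action.
  let T : (ι → M) → (ι → M) := fun v => ∑ k ∈ range D, (P ^ k).mulVec (⇑(σ ^ k) ∘ v)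
  have hσmul : ∀ (A : Matrix ι ι M) (v : ι → M),
      σ ∘ (A.mulVec v) = (σ.toRingEquiv.toRingHom.mapMatrix A).mulVec (σ ∘ v) := by
    intro A v
    ext i
    simp [Matrix.mulVec, dotProduct]
  have hT : ∀ v, P.mulVec (σ ∘ T v) = T v := by
    intro v
    have h1 : P.mulVec (σ ∘ T v) =
        ∑ k ∈ range D, (P ^ (k + 1)).mulVec (⇑(σ ^ (k + 1)) ∘ v) := by
      have : σ ∘ T v = ∑ k ∈ range D, (P ^ k).mulVec (⇑(σ ^ (k + 1)) ∘ v) := by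
        have h2 : σ ∘ T v = ∑ k ∈ range D, σ ∘ ((P ^ k).mulVec (⇑(σ ^ k) ∘ v)) := by
          ext i; simp [T]
        rw [h2]
        refine sum_congr rfl fun k _ => ?_
        rw [hσmul, map_pow, hP]
        congr 1
        ext i
        simp [pow_succ']
      rw [this, Matrix.mulVec_sum]
      refine sum_congr rfl fun k _ => ?_
      rw [Matrix.mulVec_mulVec, ← pow_succ']
    rw [h1]
    have h3 := sum_range_succ' (fun k => (P ^ k).mulVec (⇑(σ ^ k) ∘ v)) D
    rw [sum_range_succ] at h3
    have h4 : σ ^ D = 1 := by rw [hD, pow_orderOf_eq_one]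
    rw [hPD, h4, pow_zero, pow_zero] at h3
    exact (add_right_cancel h3).symm
  by_contra hne
  obtain ⟨u, hu0, hu⟩ := Submodule.exists_le_ker_of_lt_top _ (lt_top_iff_ne_top.mpr hne)
  apply hu0
  refine LinearMap.ext fun w => ?_
  have hzero : ∀ t : M, ∑ k ∈ range D, u ((P ^ k).mulVec (⇑(σ ^ k) ∘ w)) * (σ ^ k) t = 0 := by
    intro t
    have h5 : u (T (t • w)) = 0 := hu (Submodule.subset_span (hT (t • w)))
    simp only [T, map_sum] at h5
    rw [← h5]
    refine sum_congr rfl fun k _ => ?_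
    have : ⇑(σ ^ k) ∘ (t • w) = (σ ^ k) t • (⇑(σ ^ k) ∘ w) := by ext i; simp
    rw [this, Matrix.mulVec_smul, map_smul, smul_eq_mul, mul_comm]
  -- By Dedekind, the distinct automorphisms `σᵏ`, `k < D`, are linearly independent.
  have hli : LinearIndependent M
      (fun k : Fin D => (⇑(((σ ^ (k : ℕ) : M ≃ₐ[F] M) : M →* M)) : M → M)) := by
    refine (linearIndependent_monoidHom M M).comp
      (fun k : Fin D => ((σ ^ (k : ℕ) : M ≃ₐ[F] M) : M →* M)) ?_
    intro k l hkl
    have h6 : σ ^ (k : ℕ) = σ ^ (l : ℕ) := by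
      ext x; exact DFunLike.congr_fun hkl x
    rw [pow_inj_mod, ← hD, Nat.mod_eq_of_lt k.2, Nat.mod_eq_of_lt l.2] at h6
    exact Fin.ext h6
  rw [Fintype.linearIndependent_iff] at hli
  have := hli (fun k => u ((P ^ (k : ℕ)).mulVec (⇑(σ ^ (k : ℕ)) ∘ w))) (by
    ext t
    have := hzero t
    rw [← Fin.sum_univ_eq_sum_range (fun k => u ((P ^ k).mulVec (⇑(σ ^ k) ∘ w)) * (σ ^ k) t)] at this
    simpa using this) ⟨0, hD0⟩
  have e : ⇑(1 : M ≃ₐ[F] M) ∘ w = w := by ext; simp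
  simpa [e] using this

/-- Galois descent of a representation along a cyclic extension `M / F` with generator `σ`: an
intertwiner `P` from `σ(ρ)` to `ρ`, fixed by `σ` and with `P ^ [M : F] = 1`, defines a form of `ρ`
over `F`. The columns of `X` are a basis of `M ^ ι` fixed by `v ↦ P σ(v)`, so `X⁻¹ ρ X` is fixed
by `σ`. -/
theorem descent {G F M ι : Type} [Group G] [Finite G] [Field F] [Field M] [Algebra F M]
    [FiniteDimensional F M] [IsGalois F M] [Fintype ι] [DecidableEq ι]
    (σ : M ≃ₐ[F] M) (hσ : ∀ g, g ∈ Subgroup.zpowers σ) (P : Matrix ι ι M)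
    (hP : σ.toRingEquiv.toRingHom.mapMatrix P = P) (hPD : P ^ (orderOf σ) = 1)
    (ρ : G →* Matrix ι ι M)
    (hρ : ∀ g, P * σ.toRingEquiv.toRingHom.mapMatrix (ρ g) = ρ g * P) :
    ∃ ρ₀ : G →* Matrix ι ι F, ∀ g, algebraMap F M (ρ₀ g).trace = (ρ g).trace := by
  have hspan := span_descent σ _ rfl (orderOf_pos σ) P hP hPD
  obtain ⟨e, he, -, heli⟩ := Submodule.exists_fun_fin_finrank_span_eq M
    {v : ι → M | P.mulVec (σ ∘ v) = v}
  have hcard : Module.finrank M (Submodule.span M {v : ι → M | P.mulVec (σ ∘ v) = v})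
      = Fintype.card ι := by rw [hspan, finrank_top, Module.finrank_fintype_fun_eq_card]
  let c : ι ≃ Fin (Module.finrank M (Submodule.span M {v : ι → M | P.mulVec (σ ∘ v) = v})) :=
    (Fintype.equivFin ι).trans (finCongr hcard.symm)
  let X : Matrix ι ι M := Matrix.of fun i k => e (c k) i
  have hX : IsUnit X := by
    rw [← Matrix.linearIndependent_cols_iff_isUnit]
    exact heli.comp c c.injective
  set s := (σ.toRingEquiv.toRingHom.mapMatrix : Matrix ι ι M →+* Matrix ι ι M) with hs
  have hPX : P * s X = X := by
    ext i k
    have := congrFun (he (c k)) i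
    simpa [Matrix.mulVec, dotProduct, Matrix.mul_apply, X, hs] using this
  obtain ⟨U, hU⟩ : ∃ U : (Matrix ι ι M)ˣ, (U : Matrix ι ι M) = X := hX
  rw [← hU] at hPX
  let Y : G →* Matrix ι ι M :=
    { toFun := fun g => (↑U⁻¹ : Matrix ι ι M) * ρ g * U
      map_one' := by simp
      map_mul' := fun g h => by simp [mul_assoc] }
  have hUY : ∀ g, (U : Matrix ι ι M) * Y g = ρ g * U := fun g => by
    simp [Y, ← mul_assoc]
  have hsY : ∀ g, s (Y g) = Y g := by
    intro g
    have h1 : s U * s (Y g) = s (ρ g) * s U := by rw [← map_mul, hUY, map_mul]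
    have h2 : (U : Matrix ι ι M) * s (Y g) = U * Y g := by
      calc (U : Matrix ι ι M) * s (Y g) = P * s U * s (Y g) := by rw [hPX]
        _ = P * (s (ρ g) * s U) := by rw [mul_assoc, h1]
        _ = ρ g * (P * s U) := by rw [← mul_assoc, hρ, mul_assoc]
        _ = U * Y g := by rw [hPX, hUY]
    exact U.isUnit.mul_left_cancel h2
  have hfix : ∀ x : M, σ x = x → ∃ y : F, algebraMap F M y = x := by
    intro x hx
    have : x ∈ (⊥ : IntermediateField F M) := by
      rw [IsGalois.mem_bot_iff_fixed]
      intro g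
      have hle : Subgroup.zpowers σ ≤ MulAction.stabilizer (M ≃ₐ[F] M) x := by
        rw [Subgroup.zpowers_le]; exact hx
      exact hle (hσ g)
    exact IntermediateField.mem_bot.mp this
  obtain ⟨ρ₀, hρ₀⟩ := exists_lift_hom (algebraMap F M) Y Set.univ Subgroup.closure_univ (by
    intro g _
    have : ∀ i k, ∃ y, algebraMap F M y = Y g i k := fun i k =>
      hfix _ (congrFun (congrFun (hsY g) i) k)
    choose Z hZ using this
    exact ⟨Matrix.of Z, by ext i k; exact hZ i k⟩)
  refine ⟨ρ₀, fun g => ?_⟩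
  have h3 : algebraMap F M (ρ₀ g).trace = (Y g).trace := by
    rw [← hρ₀]; simp [Matrix.trace]
  rw [h3]
  change ((↑U⁻¹ : Matrix ι ι M) * ρ g * U).trace = _
  rw [Matrix.trace_mul_comm, ← mul_assoc, Units.mul_inv, one_mul]

/-! ### The explicit form of the representation -/

theorem conj_pow_pow {G : Type} [Group G] {a b : G} {j : ℕ} (hba : b * a * b⁻¹ = a ^ j) (i : ℕ) :
    b ^ i * a * (b ^ i)⁻¹ = a ^ (j ^ i) := by
  induction i with
  | zero => simp
  | succ i ih =>
    have h1 : b ^ (i + 1) * a * (b ^ (i + 1))⁻¹ = b * (b ^ i * a * (b ^ i)⁻¹) * b⁻¹ := by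
      rw [pow_succ']; group
    rw [h1, ih, ← conj_pow, hba, ← pow_mul, pow_succ']

/-- A simple object of `FDRep K G` has no proper nonzero subspace stable under `G`. -/
theorem invariant_eq_top {K G : Type} [Field K] [Group G] (τ : FDRep K G) [Simple τ]
    (W : Submodule K τ) (hW : ∀ g, ∀ v ∈ W, τ.ρ g v ∈ W) (hne : W ≠ ⊥) : W = ⊤ := by
  let s : Representation K G W :=
    { toFun := fun g => (τ.ρ g).restrict (hW g)
      map_one' := by ext; simp
      map_mul' := fun g h => by ext; simp }
  let f : FDRep.of s ⟶ τ :=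
    { hom := FGModuleCat.ofHom W.subtype
      comm := fun g => by ext x; rfl }
  have hf : ∀ x, f x = W.subtype x := fun x => rfl
  have : Mono f := ConcreteCategory.mono_of_injective _ (fun x y h => Subtype.ext h)
  have hf0 : f ≠ 0 := by
    intro h
    apply hne
    rw [eq_bot_iff]
    intro x hx
    have : f (⟨x, hx⟩ : W) = 0 := by rw [h]; rfl
    simpa [hf] using this
  have : IsIso f := isIso_of_mono_of_nonzero hf0
  rw [eq_top_iff]
  intro x _
  have h1 : f ((inv f) x) = x := by
    have := congrArg (fun (k : τ ⟶ τ) => k x) (IsIso.inv_hom_id f)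
    exact this
  rw [← h1, hf]
  exact Submodule.coe_mem _

/-- The explicit form of a faithful irreducible representation: it is induced from `⟨a, b ^ d⟩`. Take
an eigenvector `v₀` of `a` with eigenvalue `ζ ≠ 1`; the vectors `b⁻ⁱ v₀`, `i < d`, are eigenvectors of
`a` for the distinct eigenvalues `ζ ^ (j ^ i)` and span a stable subspace, and `b ^ d` is central,
hence a scalar `ω`. -/
theorem exists_matrix_form {G K V : Type} [Group G] [Field K] [IsAlgClosed K] [CharZero K]
    [AddCommGroup V] [Module K V] [FiniteDimensional K V]
    (ρ : G →* (V →ₗ[K] V)) (hinj : Function.Injective ρ)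
    (hirr : ∀ W : Submodule K V, (∀ g, ∀ v ∈ W, ρ g v ∈ W) → W ≠ ⊥ → W = ⊤)
    (q d j : ℕ) (hq : q.Prime) (hd : 0 < d) (a b : G) (ha : orderOf a = q)
    (hba : b * a * b⁻¹ = a ^ j) (hj : orderOf (j : ZMod q) = d)
    (hgen : Subgroup.closure {a, b} = ⊤) :
    ∃ (ζ ω : K) (R : G →* Matrix (Fin d) (Fin d) K), IsPrimitiveRoot ζ q ∧
      R a = Matrix.diagonal (fun i : Fin d => ζ ^ (j ^ (i : ℕ))) ∧
      (∀ i k, R b i k = 0 ∨ R b i k = 1 ∨ R b i k = ω) ∧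
      R (b ^ d) = ω • 1 ∧ ∀ g, (R g).trace = LinearMap.trace K V (ρ g) := by
  have : Fact q.Prime := ⟨hq⟩
  have haq : a ^ q = 1 := by rw [← ha, pow_orderOf_eq_one]
  have hconj := conj_pow_pow hba
  have hjd : a ^ (j ^ d) = a := by
    have h1 : ((j ^ d : ℕ) : ZMod q) = (1 : ℕ) := by
      push_cast; rw [← hj, pow_orderOf_eq_one]
    rw [ZMod.natCast_eq_natCast_iff] at h1
    rw [← pow_mod_orderOf, ha, h1, ← ha, pow_mod_orderOf, pow_one]
  have hcomm_a : a * b ^ d = b ^ d * a := by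
    have := hconj d
    rw [hjd, mul_inv_eq_iff_eq_mul] at this
    exact this.symm
  have hcentral : ∀ g : G, g * b ^ d = b ^ d * g := by
    have hle : Subgroup.closure {a, b} ≤ Subgroup.centralizer {b ^ d} := by
      rw [Subgroup.closure_le]
      rintro x (rfl | rfl)
      · rw [SetLike.mem_coe, Subgroup.mem_centralizer_singleton_iff]
        exact hcomm_a
      · rw [SetLike.mem_coe, Subgroup.mem_centralizer_singleton_iff]
        exact (pow_succ' _ _).symm.trans (pow_succ _ _)
    intro g
    have hg : g ∈ Subgroup.centralizer {b ^ d} := hle (by rw [hgen]; trivial)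
    exact Subgroup.mem_centralizer_singleton_iff.mp hg
  set T := ρ a with hT
  have hTq : T ^ q = 1 := by rw [hT, ← map_pow, haq, map_one]
  have hT1 : T ≠ 1 := by
    intro h
    have : a = 1 := hinj (by rw [← hT, h, map_one])
    rw [this, orderOf_one] at ha
    exact hq.one_lt.ne ha
  -- `T` preserves the range of `T - 1`, which is nonzero; its eigenvalues there are not `1`, since
  -- `1 + T + ⋯ + T ^ (q - 1)` kills that range but multiplies a fixed vector by `q`.
  obtain ⟨ζ, v₀, hv₀, hv₀0, hζ1⟩ : ∃ (ζ : K) (v₀ : V), T v₀ = ζ • v₀ ∧ v₀ ≠ 0 ∧ ζ ≠ 1 := by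
    let W := LinearMap.range (T - 1)
    have hW : ∀ x ∈ W, T x ∈ W := by
      rintro _ ⟨y, rfl⟩
      exact ⟨T y, by simp⟩
    have hWne : Nontrivial W := by
      rw [Submodule.nontrivial_iff_ne_bot]
      intro h
      exact hT1 (sub_eq_zero.mp (LinearMap.range_eq_bot.mp h))
    obtain ⟨ζ, hζ⟩ := Module.End.exists_eigenvalue (T.restrict hW)
    obtain ⟨⟨x, y, hy⟩, hx⟩ := hζ.exists_hasEigenvector
    have hTx : T x = ζ • x := congrArg Subtype.val hx.apply_eq_smul
    have hx0 : x ≠ 0 := fun h => hx.2 (Subtype.ext h)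
    refine ⟨ζ, x, hTx, hx0, ?_⟩
    rintro rfl
    have h0 : (∑ i ∈ range q, T ^ i) * (T - 1) = 0 := by rw [geom_sum_mul, hTq, sub_self]
    have h1 : (∑ i ∈ range q, T ^ i) x = 0 := by
      rw [← hy, ← Module.End.mul_apply, h0]; rfl
    have h2 : ∀ i : ℕ, (T ^ i) x = x := by
      intro i
      induction i with
      | zero => simp
      | succ i ih => rw [pow_succ, Module.End.mul_apply, hTx, one_smul, ih]
    rw [LinearMap.sum_apply, sum_congr rfl (fun i _ => h2 i), sum_const, card_range,
      ← Nat.cast_smul_eq_nsmul K] at h1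
    exact (smul_ne_zero (Nat.cast_ne_zero.mpr hq.ne_zero) hx0) h1
  have hpowv : ∀ i : ℕ, (T ^ i) v₀ = ζ ^ i • v₀ := by
    intro i
    induction i with
    | zero => simp
    | succ i ih => rw [pow_succ, Module.End.mul_apply, hv₀, map_smul, ih, smul_smul, pow_succ']
  have hζq : ζ ^ q = 1 := by
    have h1 := hpowv q
    rw [hTq, Module.End.one_apply] at h1
    have h2 : (ζ ^ q - 1) • v₀ = 0 := by rw [sub_smul, one_smul, ← h1, sub_self]
    exact sub_eq_zero.mp ((smul_eq_zero.mp h2).resolve_right hv₀0)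
  have hζ : IsPrimitiveRoot ζ q := by
    rw [IsPrimitiveRoot.iff_orderOf]
    exact orderOf_eq_prime hζq hζ1
  have hVn : Nontrivial V := ⟨v₀, 0, hv₀0⟩
  obtain ⟨ω, hω⟩ := Module.End.exists_eigenvalue (ρ (b ^ d))
  have hωtop : ∀ v, ρ (b ^ d) v = ω • v := by
    have := hirr (Module.End.eigenspace (ρ (b ^ d)) ω) (by
      intro g v hv
      rw [Module.End.mem_eigenspace_iff] at hv ⊢
      rw [← Module.End.mul_apply, ← map_mul, ← hcentral, map_mul, Module.End.mul_apply, hv,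
        map_smul]) hω
    intro v
    rw [← Module.End.mem_eigenspace_iff, this]
    trivial
  -- `b` permutes the eigenlines `K v₀, …, K v_{d-1}` of `a` cyclically, with `b ^ d = ω`.
  let v : ℕ → V := fun i => ρ (b⁻¹ ^ i) v₀
  have hav : ∀ i, ρ a (v i) = ζ ^ (j ^ i) • v i := by
    intro i
    have h1 : a * b⁻¹ ^ i = b⁻¹ ^ i * a ^ (j ^ i) := by rw [← hconj i]; group
    simp only [v]
    rw [← Module.End.mul_apply, ← map_mul, h1, map_mul, Module.End.mul_apply, map_pow ρ a, ← hT,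
      hpowv, map_smul]
  have hbv : ∀ i, ρ b (v (i + 1)) = v i := by
    intro i
    simp only [v]
    rw [← Module.End.mul_apply, ← map_mul, pow_succ', mul_inv_cancel_left]
  have hbv0 : ρ b (v 0) = ω • v (d - 1) := by
    rw [← hωtop]
    simp only [v]
    rw [← Module.End.mul_apply, ← Module.End.mul_apply, ← map_mul, ← map_mul]
    congr 2
    obtain ⟨e, rfl⟩ : ∃ e, d = e + 1 := ⟨d - 1, by omega⟩
    rw [Nat.add_sub_cancel]
    simp [pow_succ']
  have hv0 : ∀ i, v i ≠ 0 := by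
    intro i h
    apply hv₀0
    have h1 : ρ (b ^ i) (v i) = v₀ := by
      simp only [v]
      rw [← Module.End.mul_apply, ← map_mul]
      simp
    rw [← h1, h, map_zero]
  have hli : LinearIndependent K (fun i : Fin d => v i) := by
    refine Module.End.eigenvectors_linearIndependent' (ρ a) (fun i : Fin d => ζ ^ (j ^ (i : ℕ))) ?_ _
      fun i => ⟨Module.End.mem_eigenspace_iff.mpr (hav i), hv0 i⟩
    intro i k h
    have h1 := (pow_eq_pow_iff_cast hq.ne_zero hζ _ _).mp h
    push_cast at h1
    refine Fin.ext (pow_injOn_Iio_orderOf ?_ ?_ h1)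
    · rw [hj]; exact i.2
    · rw [hj]; exact k.2
  have hspan : ⊤ ≤ Submodule.span K (Set.range (fun i : Fin d => v i)) := by
    set W := Submodule.span K (Set.range (fun i : Fin d => v i)) with hW
    have hmem : ∀ i, i < d → v i ∈ W := fun i hi => Submodule.subset_span ⟨⟨i, hi⟩, rfl⟩
    have hWa : W ≤ W.comap (ρ a) := by
      rw [hW, Submodule.span_le]
      rintro _ ⟨i, rfl⟩
      change ρ a (v i) ∈ W
      rw [hav]
      exact W.smul_mem _ (hmem i i.2)
    have hWb : W ≤ W.comap (ρ b) := by
      rw [hW, Submodule.span_le]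
      rintro _ ⟨⟨i, hi⟩, rfl⟩
      change ρ b (v i) ∈ W
      cases i with
      | zero => rw [hbv0]; exact W.smul_mem _ (hmem _ (by omega))
      | succ i => rw [hbv]; exact hmem _ (by omega)
    have hall : ∀ g, W.map (ρ g) = W := by
      intro g
      have hg : g ∈ Subgroup.closure {a, b} := by rw [hgen]; trivial
      have hinjg : ∀ g, Function.Injective (ρ g) := by
        intro g x y h
        have := congrArg (ρ g⁻¹) h
        rwa [← Module.End.mul_apply, ← Module.End.mul_apply, ← map_mul, inv_mul_cancel, map_one]
          at this
      have hbase : ∀ g, W ≤ W.comap (ρ g) → W.map (ρ g) = W := fun g h =>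
        Submodule.eq_of_le_of_finrank_eq (Submodule.map_le_iff_le_comap.mpr h)
          (Submodule.equivMapOfInjective _ (hinjg g) W).symm.finrank_eq
      induction hg using Subgroup.closure_induction with
      | mem x hx =>
        rcases hx with rfl | rfl
        · exact hbase _ hWa
        · exact hbase _ hWb
      | one => rw [map_one]; exact Submodule.map_id W
      | mul x y _ _ hx hy =>
        rw [map_mul, Module.End.mul_eq_comp, Submodule.map_comp, hy, hx]
      | inv x _ hx =>
        conv_lhs => rw [← hx, ← Submodule.map_comp, ← Module.End.mul_eq_comp, ← map_mul,
          inv_mul_cancel, map_one]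
        exact Submodule.map_id W
    refine (hirr W (fun g x hx => ?_) ?_).ge
    · rw [← hall g]; exact Submodule.mem_map_of_mem hx
    · intro h
      have := hmem 0 hd
      rw [h, Submodule.mem_bot] at this
      exact hv0 0 this
  let B := Module.Basis.mk hli hspan
  have hB : ∀ i, B i = v i := fun i => by simp [B]
  let R : G →* Matrix (Fin d) (Fin d) K :=
    (MonoidHomClass.toMonoidHom (LinearMap.toMatrixAlgEquiv B)).comp ρ
  have hR : ∀ g, R g = LinearMap.toMatrix B B (ρ g) := fun g => rfl
  refine ⟨ζ, ω, R, hζ, ?_, ?_, ?_, ?_⟩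
  · ext i k
    rw [hR, LinearMap.toMatrix_apply, hB, hav, ← hB, map_smul, B.repr_self, Matrix.diagonal_apply]
    by_cases h : i = k
    · subst h; simp
    · simp [h]
  · rintro i ⟨k, hk⟩
    rw [hR, LinearMap.toMatrix_apply, hB]
    cases k with
    | zero =>
      have : v (d - 1) = B ⟨d - 1, by omega⟩ := (hB ⟨d - 1, by omega⟩).symm
      simp only [hbv0, this, map_smul, B.repr_self, Finsupp.smul_apply, Finsupp.single_apply]
      split_ifs <;> simp
    | succ k =>
      have : v k = B ⟨k, by omega⟩ := (hB ⟨k, by omega⟩).symm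
      simp only [hbv, this, B.repr_self, Finsupp.single_apply]
      split_ifs <;> simp
  · rw [hR]
    have : ρ (b ^ d) = ω • 1 := LinearMap.ext fun x => by rw [hωtop]; rfl
    rw [this, map_smul]
    congr 1
    exact LinearMap.toMatrix_one B
  · intro g
    rw [hR, LinearMap.trace_eq_matrix_trace K B]

/-! ### Descent to the field of character values -/

/-- If `x ↦ x ^ c` preserves the power sums of the family `ζ ^ (j ^ i)`, `i < d`, of `q`-th roots of
unity, then `ζ ^ c` belongs to the family: pairing the power sums with the powers of `ζ ^ (-c)` over
`k < q` counts the occurrences of `ζ ^ c`, `q` times each. -/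
theorem exists_pow_eq_of_sum_eq {M : Type} [Field M] [CharZero M] (q d j c : ℕ) (hq : q ≠ 0)
    (hd : 0 < d) (ζ : M) (hζ : ζ ^ q = 1)
    (h : ∀ k : ℕ, ∑ i ∈ range d, ((ζ ^ c) ^ (j ^ i)) ^ k = ∑ i ∈ range d, (ζ ^ (j ^ i)) ^ k) :
    ∃ i < d, ζ ^ c = ζ ^ (j ^ i) := by
  classical
  have hζ0 : ζ ≠ 0 := by rintro rfl; simp [hq] at hζ
  have hη0 : ζ ^ c ≠ 0 := pow_ne_zero _ hζ0
  have hηq : (ζ ^ c) ^ q = 1 := by rw [← pow_mul, mul_comm, pow_mul, hζ, one_pow]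
  have hS : ∀ x : M, x ^ q = 1 → ∑ k ∈ range q, ((ζ ^ c)⁻¹) ^ k * x ^ k
      = ((if x = ζ ^ c then q else 0 : ℕ) : M) := by
    intro x hx
    simp_rw [← mul_pow]
    split_ifs with hxc
    · simp [hxc, inv_mul_cancel₀ hη0]
    · have h1 : (ζ ^ c)⁻¹ * x ≠ 1 := by
        rw [Ne, inv_mul_eq_one₀ hη0]; exact fun e => hxc e.symm
      have h2 := mul_geom_sum ((ζ ^ c)⁻¹ * x) q
      rw [mul_pow, inv_pow, hηq, hx, inv_one, mul_one, sub_self] at h2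
      simpa using (mul_eq_zero.mp h2).resolve_left (sub_ne_zero.mpr h1)
  have hswap : ∀ f : ℕ → M, (∀ i, f i ^ q = 1) →
      ∑ k ∈ range q, ((ζ ^ c)⁻¹) ^ k * ∑ i ∈ range d, f i ^ k
        = ((∑ i ∈ range d, if f i = ζ ^ c then q else 0 : ℕ) : M) := by
    intro f hf
    simp_rw [mul_sum]
    rw [sum_comm, Nat.cast_sum]
    exact sum_congr rfl fun i _ => hS _ (hf i)
  have h1 := hswap (fun i => (ζ ^ c) ^ (j ^ i))
    (fun i => by rw [← pow_mul, mul_comm, pow_mul, hηq, one_pow])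
  have h2 := hswap (fun i => ζ ^ (j ^ i))
    (fun i => by rw [← pow_mul, mul_comm, pow_mul, hζ, one_pow])
  simp only [h] at h1
  rw [h1, Nat.cast_inj] at h2
  by_contra! hne
  rw [sum_eq_zero (s := range d) (f := fun i => if ζ ^ (j ^ i) = ζ ^ c then q else 0)
    (fun i hi => if_neg (hne i (mem_range.mp hi)).symm), sum_eq_zero_iff] at h2
  have := h2 0 (mem_range.mpr hd)
  simp [hq] at this

/-- Descent of the explicit representation. Since traces are fixed by `σ`, the automorphism sends `ζ`
to some `ζ ^ (j ^ i)`, so `ρ (b ^ (d - i))` intertwines `σ(ρ)` and `ρ`; it is fixed by `σ` and has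
order dividing `[M : F]`, which is what `descent` requires. -/
theorem exists_form {G F M : Type} [Group G] [Finite G] [Field F] [Field M] [CharZero M]
    [Algebra F M] [FiniteDimensional F M] [IsGalois F M] (σ : M ≃ₐ[F] M)
    (hσ : ∀ g, g ∈ Subgroup.zpowers σ) (q d j : ℕ) (hq : q ≠ 0) (hd : 0 < d)
    (a b : G) (ha : a ^ q = 1) (hba : b * a * b⁻¹ = a ^ j) (hj : orderOf (j : ZMod q) = d)
    (hgen : Subgroup.closure {a, b} = ⊤) (hb : b ^ orderOf σ = 1)
    (ρ : G →* Matrix (Fin d) (Fin d) M) (ζ : M) (hζ : IsPrimitiveRoot ζ q)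
    (hρa : ρ a = Matrix.diagonal fun i : Fin d => ζ ^ (j ^ (i : ℕ)))
    (hρb : ∀ i k, σ (ρ b i k) = ρ b i k)
    (htr : ∀ g, σ (ρ g).trace = (ρ g).trace) :
    ∃ ρ₀ : G →* Matrix (Fin d) (Fin d) F, ∀ g, algebraMap F M (ρ₀ g).trace = (ρ g).trace := by
  obtain ⟨c, -, hc⟩ := (have : NeZero q := ⟨hq⟩; hζ.eq_pow_of_pow_eq_one (ξ := σ ζ)
    (by rw [← map_pow, hζ.pow_eq_one, map_one]))
  obtain ⟨i, hi, hci⟩ := exists_pow_eq_of_sum_eq q d j c hq hd ζ hζ.pow_eq_one (by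
    intro k
    have h1 : (ρ (a ^ k)).trace = ∑ i ∈ range d, (ζ ^ (j ^ i)) ^ k := by
      rw [map_pow, hρa, Matrix.diagonal_pow, Matrix.trace_diagonal,
        ← Fin.sum_univ_eq_sum_range (fun i => (ζ ^ (j ^ i)) ^ k)]
      rfl
    have h2 := htr (a ^ k)
    rw [h1, map_sum] at h2
    rw [← h2, hc]
    simp)
  have hconj := conj_pow_pow hba
  have hcj : a ^ (j ^ (d - i) * c) = a := by
    have h1 : ((j ^ (d - i) * c : ℕ) : ZMod q) = (1 : ℕ) := by
      rw [Nat.cast_mul, (pow_eq_pow_iff_cast hq hζ _ _).mp hci, ← Nat.cast_mul, ← pow_add,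
        Nat.sub_add_cancel hi.le]
      push_cast
      rw [← hj, pow_orderOf_eq_one]
    rw [ZMod.natCast_eq_natCast_iff] at h1
    rw [← pow_mod_orderOf, h1.of_dvd (orderOf_dvd_of_pow_eq_one ha), pow_mod_orderOf, pow_one]
  set s := (σ.toRingEquiv.toRingHom.mapMatrix :
    Matrix (Fin d) (Fin d) M →+* Matrix (Fin d) (Fin d) M) with hs
  have hsb : s (ρ b) = ρ b := by ext i k; exact hρb i k
  have hsa : s (ρ a) = ρ (a ^ c) := by
    rw [map_pow, hρa, Matrix.diagonal_pow]
    ext x y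
    by_cases hxy : x = y
    · subst hxy
      simp [hs, ← hc, ← pow_mul, mul_comm]
    · simp [hs, hxy]
  refine descent σ hσ (ρ (b ^ (d - i))) (by rw [map_pow, map_pow, hsb]) ?_ ρ fun g => ?_
  · rw [← map_pow, ← pow_mul, mul_comm, pow_mul, hb, one_pow, map_one]
  · have hg : g ∈ Subgroup.closure {a, b} := by rw [hgen]; trivial
    rw [← hs]
    induction hg using Subgroup.closure_induction with
    | mem x hx =>
      rcases hx with rfl | rfl
      · rw [hsa, ← map_mul, ← map_mul]
        congr 1
        rw [← mul_inv_eq_iff_eq_mul, ← conj_pow, hconj, ← pow_mul, hcj]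
      · rw [hsb, ← map_mul, ← map_mul, ← pow_succ, ← pow_succ']
    | one => simp
    | mul x y _ _ hx hy => rw [map_mul, map_mul, ← mul_assoc, hx, mul_assoc, hy, mul_assoc]
    | inv x _ hx =>
      have h1 : ρ x⁻¹ * ρ x = 1 := by rw [← map_mul, inv_mul_cancel, map_one]
      have h2 : s (ρ x) * s (ρ x⁻¹) = 1 := by
        rw [← map_mul, ← map_mul, mul_inv_cancel, map_one, map_one]
      calc ρ (b ^ (d - i)) * s (ρ x⁻¹)
          = ρ x⁻¹ * (ρ x * ρ (b ^ (d - i))) * s (ρ x⁻¹) := by rw [← mul_assoc, h1, one_mul]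
        _ = ρ x⁻¹ * ρ (b ^ (d - i)) := by rw [← hx, mul_assoc, mul_assoc, h2, mul_one]

theorem exists_lift_of_mem_range {G L K : Type} [Group G] [Finite G] [Field L] [Field K]
    (f : L →+* K) (d j : ℕ) (a b : G) (hgen : Subgroup.closure {a, b} = ⊤) (ζ ω : K)
    (R : G →* Matrix (Fin d) (Fin d) K)
    (hRa : R a = Matrix.diagonal (fun i : Fin d => ζ ^ (j ^ (i : ℕ))))
    (hRb : ∀ i k, R b i k = 0 ∨ R b i k = 1 ∨ R b i k = ω) (hζ : ζ ∈ f.range) (hω : ω ∈ f.range) :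
    ∃ ρ : G →* Matrix (Fin d) (Fin d) L, ∀ g, f.mapMatrix (ρ g) = R g := by
  refine exists_lift_hom f R {a, b} hgen ?_
  have key : ∀ Y : Matrix (Fin d) (Fin d) K, (∀ i k, Y i k ∈ f.range) → ∃ X, f.mapMatrix X = Y := by
    intro Y hY
    choose X hX using hY
    exact ⟨Matrix.of X, Matrix.ext fun i k => hX i k⟩
  rintro g (rfl | rfl)
  · refine key _ fun i k => ?_
    rw [hRa, Matrix.diagonal_apply]
    split_ifs
    · exact pow_mem hζ _
    · exact zero_mem _
  · refine key _ fun i k => ?_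
    rcases hRb i k with h | h | h <;> rw [h]
    · exact zero_mem _
    · exact one_mem _
    · exact hω

/-- The explicit representation is realisable over the field `F` generated over `ℚ_ℓ` by its
traces. -/
theorem exists_rep_over_trace_field (ℓ : ℕ) [Fact ℓ.Prime] {G F K : Type} [Group G] [Finite G] [Field F] [Field K]
    [Algebra ℚ_[ℓ] F] [Algebra F K] [Algebra ℚ_[ℓ] K] [IsScalarTower ℚ_[ℓ] F K]
    [IsAlgClosed K] [CharZero K] (q d j s : ℕ) (hq : q.Prime) (hℓq : ℓ ≠ q) (hd : 0 < d)
    (hs : 0 < s) (hds : d ∣ s)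
    (a b : G) (ha : a ^ q = 1) (hb : b ^ s = 1) (hba : b * a * b⁻¹ = a ^ j)
    (hj : orderOf (j : ZMod q) = d) (hgen : Subgroup.closure {a, b} = ⊤)
    (ζ ω : K) (R : G →* Matrix (Fin d) (Fin d) K) (hζ : IsPrimitiveRoot ζ q)
    (hRa : R a = Matrix.diagonal (fun i : Fin d => ζ ^ (j ^ (i : ℕ))))
    (hRb : ∀ i k, R b i k = 0 ∨ R b i k = 1 ∨ R b i k = ω) (hRω : R (b ^ d) = ω • 1)
    (hF : ∀ x : F, algebraMap F K x ∈
      IntermediateField.adjoin ℚ_[ℓ] (Set.range fun g => (R g).trace))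
    (htr : ∀ g, ∃ y : F, algebraMap F K y = (R g).trace) :
    ∃ ρ₀ : G →* Matrix (Fin d) (Fin d) F, ∀ g, algebraMap F K (ρ₀ g).trace = (R g).trace := by
  have hℓ : ℓ.Prime := Fact.out
  have : CharZero F := charZero_of_injective_algebraMap (algebraMap ℚ_[ℓ] F).injective
  have hωs : ω ^ (s / d) = 1 := by
    have h1 : R (b ^ s) = ω ^ (s / d) • 1 := by
      conv_lhs => rw [← Nat.mul_div_cancel' hds, pow_mul, map_pow, hRω, smul_pow, one_pow]
    rw [hb, map_one] at h1
    simpa using (congrFun (congrFun h1 ⟨0, hd⟩) ⟨0, hd⟩).symm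
  have hωF : ω ∈ (algebraMap F K).range := by
    obtain ⟨y, hy⟩ := htr (b ^ d)
    rw [hRω, Matrix.trace_smul, Matrix.trace_one, Fintype.card_fin, smul_eq_mul] at hy
    have hd0 : (d : K) ≠ 0 := Nat.cast_ne_zero.mpr hd.ne'
    exact ⟨y / d, by rw [map_div₀, hy, map_natCast, mul_div_cancel_right₀ _ hd0]⟩
  -- `M` is the extension of `F` by the `N`-th roots of unity. The factor `q` puts `ζ` in `M`, and the
  -- other factor makes `[M : F]` divisible by `s`, as `F` lies in `ℚ_ℓ(θ)` with `θ` of order `m`.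
  set m := q * s with hm
  have hm0 : m ≠ 0 := mul_ne_zero hq.ne_zero hs.ne'
  have ht0 : 0 < m.totient := Nat.totient_pos.mpr (Nat.pos_of_ne_zero hm0)
  set N := q * (ℓ ^ (m.totient * s) - 1) with hN
  have hpow : 1 < ℓ ^ (m.totient * s) := Nat.one_lt_pow (mul_pos ht0 hs).ne' hℓ.one_lt
  have hN0 : N ≠ 0 := mul_ne_zero hq.ne_zero (by omega)
  have hNℓ : ℓ.Coprime N := by
    refine Nat.Coprime.mul_right ((Nat.coprime_primes hℓ hq).mpr hℓq) ?_
    rw [hℓ.coprime_iff_not_dvd]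
    intro h
    have h1 : ℓ ∣ ℓ ^ (m.totient * s) := dvd_pow_self _ (mul_pos ht0 hs).ne'
    have h2 := (Nat.dvd_sub_iff_right hpow.le h1).mp h
    exact hℓ.one_lt.ne' (Nat.dvd_one.mp h2)
  have : NeZero N := ⟨hN0⟩
  obtain ⟨M, _, _, _⟩ : ∃ (M : Type) (_ : Field M) (_ : Algebra F M),
      IsCyclotomicExtension {N} F M := ⟨CyclotomicField N F, inferInstance, inferInstance,
        inferInstance⟩
  obtain ⟨E, _, _, _, _⟩ : ∃ (E : Type) (_ : Field E) (_ : Algebra M E),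
      IsAlgClosed E ∧ Algebra.IsAlgebraic M E :=
    ⟨AlgebraicClosure M, inferInstance, inferInstance, inferInstance, inferInstance⟩
  let : Algebra F E := ((algebraMap M E).comp (algebraMap F M)).toAlgebra
  have : IsScalarTower F M E := IsScalarTower.of_algebraMap_eq fun _ => rfl
  let : Algebra ℚ_[ℓ] M := ((algebraMap F M).comp (algebraMap ℚ_[ℓ] F)).toAlgebra
  have : IsScalarTower ℚ_[ℓ] F M := IsScalarTower.of_algebraMap_eq fun _ => rfl
  let : Algebra ℚ_[ℓ] E := ((algebraMap F E).comp (algebraMap ℚ_[ℓ] F)).toAlgebra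
  have : IsScalarTower ℚ_[ℓ] F E := IsScalarTower.of_algebraMap_eq fun _ => rfl
  have : CharZero M := charZero_of_injective_algebraMap (algebraMap F M).injective
  have : CharZero E := charZero_of_injective_algebraMap (algebraMap F E).injective
  have : FiniteDimensional F M := IsCyclotomicExtension.finiteDimensional {N} F M
  have : IsGalois F M := IsCyclotomicExtension.isGalois {N} F M
  have : Algebra.IsAlgebraic F E := Algebra.IsAlgebraic.trans F M E
  let e : E →ₐ[F] K := IsAlgClosed.lift
  have he : Function.Injective e := e.toRingHom.injective
  have : NeZero m := ⟨hm0⟩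
  have : NeZero (m : E) := ⟨Nat.cast_ne_zero.mpr hm0⟩
  obtain ⟨θ, hθ⟩ := HasEnoughRootsOfUnity.exists_primitiveRoot E m
  have hθK : IsPrimitiveRoot (e θ) m := hθ.map_of_injective he
  have hmem : ∀ x : K, x ^ m = 1 → x ∈ IntermediateField.adjoin ℚ_[ℓ] {e θ} := by
    intro x hx
    obtain ⟨i, -, rfl⟩ := hθK.eq_pow_of_pow_eq_one hx
    exact pow_mem (IntermediateField.mem_adjoin_simple_self _ _) _
  have hFK : ∀ x : F, algebraMap F K x ∈ IntermediateField.adjoin ℚ_[ℓ] {e θ} := by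
    obtain ⟨ρ, hρ⟩ := exists_lift_of_mem_range
      (IntermediateField.adjoin ℚ_[ℓ] {e θ}).val.toRingHom d j a b hgen ζ ω R hRa hRb
      ⟨⟨ζ, hmem ζ (by rw [hm, pow_mul, hζ.pow_eq_one, one_pow])⟩, rfl⟩
      ⟨⟨ω, hmem ω (by
        rw [hm, ← Nat.div_mul_cancel hds, mul_comm, mul_assoc, pow_mul, hωs, one_pow])⟩, rfl⟩
    have hle : IntermediateField.adjoin ℚ_[ℓ] (Set.range fun g => (R g).trace) ≤
        IntermediateField.adjoin ℚ_[ℓ] {e θ} := by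
      rw [IntermediateField.adjoin_le_iff]
      rintro _ ⟨g, rfl⟩
      have h1 : (R g).trace = ((ρ g).trace : K) := by
        rw [← hρ]; simp [Matrix.trace]
      simp only [h1]
      exact ((ρ g).trace).2
    exact fun x => hle (hF x)
  let e' : E →ₐ[ℚ_[ℓ]] K := e.restrictScalars ℚ_[ℓ]
  have hFE : ∀ x : F, algebraMap F E x ∈ IntermediateField.adjoin ℚ_[ℓ] {θ} := by
    intro x
    have h1 : (IntermediateField.adjoin ℚ_[ℓ] {θ}).map e' =
        IntermediateField.adjoin ℚ_[ℓ] {e θ} := by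
      rw [IntermediateField.adjoin_map, Set.image_singleton]; rfl
    have h2 := hFK x
    rw [← h1] at h2
    obtain ⟨y, hy, hyx⟩ := h2
    have h3 : y = algebraMap F E x := he (by rw [e.commutes]; exact hyx)
    rw [← h3]; exact hy
  have : Algebra.IsAlgebraic ℚ_[ℓ] F := by
    have hθint : IsIntegral ℚ_[ℓ] θ :=
      IsIntegral.of_pow (Nat.pos_of_ne_zero hm0) (by rw [hθ.pow_eq_one]; exact isIntegral_one)
    have h1 := IntermediateField.isAlgebraic_adjoin_simple hθint
    refine ⟨fun x => ?_⟩
    have h2 := h1.isAlgebraic ⟨_, hFE x⟩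
    have h3 := h2.algHom (IntermediateField.adjoin ℚ_[ℓ] {θ}).val
    exact (isAlgebraic_algHom_iff (IsScalarTower.toAlgHom ℚ_[ℓ] F E)
      (algebraMap F E).injective).mp h3
  have : Algebra.IsAlgebraic ℚ_[ℓ] M := Algebra.IsAlgebraic.trans ℚ_[ℓ] F M
  have : Algebra.IsAlgebraic ℚ_[ℓ] E := Algebra.IsAlgebraic.trans ℚ_[ℓ] F E
  have : IsAlgClosure ℚ_[ℓ] E := ⟨inferInstance, inferInstance⟩
  have : Normal ℚ_[ℓ] E := IsAlgClosure.normal ℚ_[ℓ] E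
  have hε := IsCyclotomicExtension.zeta_spec N F M
  obtain ⟨σ, hσ⟩ := exists_generator ℓ F M N hNℓ _ hε
  have hdvd : s ∣ orderOf σ := by
    refine dvd_of_pow_eq_one ℓ F M E N m s _ hN0 hm0 hNℓ (Dvd.intro_left _ rfl) _ hε θ hθ hFE ?_
    intro g
    obtain ⟨k, rfl⟩ := hσ g
    rw [← zpow_natCast, zpow_comm, zpow_natCast, pow_orderOf_eq_one, one_zpow]
  -- The coefficients of `R` lie in the image of `M`.
  let ι : M →ₐ[F] K := e.comp (IsScalarTower.toAlgHom F M E)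
  have hι : Function.Injective ι := ι.toRingHom.injective
  obtain ⟨ζ', hζ'⟩ : ζ ∈ ι.toRingHom.range := by
    have h1 := hε.map_of_injective hι
    obtain ⟨i, -, hi⟩ := h1.eq_pow_of_pow_eq_one (ξ := ζ)
      (by rw [hN, pow_mul, hζ.pow_eq_one, one_pow])
    exact ⟨_ ^ i, by rw [← hi]; exact map_pow ι _ _⟩
  obtain ⟨w, hw⟩ := hωF
  obtain ⟨ρ, hρ⟩ := exists_lift_of_mem_range ι.toRingHom d j a b hgen ζ ω R hRa hRb
    ⟨ζ', hζ'⟩ ⟨algebraMap F M w, by rw [← hw]; exact ι.commutes w⟩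
  have hρe : ∀ g i k, ι (ρ g i k) = R g i k := fun g i k => by rw [← hρ]; rfl
  have hρt : ∀ g, ι (ρ g).trace = (R g).trace := fun g => by
    simp [Matrix.trace, hρe]
  have hfix : ∀ (x : M) (y : F), ι x = algebraMap F K y → σ x = x := by
    intro x y hxy
    have : x = algebraMap F M y := hι (by rw [hxy, ι.commutes])
    rw [this, σ.commutes]
  obtain ⟨ρ₀, hρ₀⟩ := exists_form σ hσ q d j hq.ne_zero hd a b ha hba hj hgen
    (by obtain ⟨k, hk⟩ := hdvd; rw [hk, pow_mul, hb, one_pow]) ρ ζ'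
    (IsPrimitiveRoot.of_map_of_injective (f := ι) (by
      rw [show ι ζ' = ζ from hζ']
      exact hζ) hι)
    (by
      ext i k
      apply hι
      rw [hρe, hRa, ← show ι ζ' = ζ from hζ']
      by_cases h : i = k
      · subst h; simp
      · simp [h])
    (by
      intro i k
      rcases hRb i k with h | h | h
      · exact hfix _ 0 (by rw [hρe, h, map_zero])
      · exact hfix _ 1 (by rw [hρe, h, map_one])
      · exact hfix _ w (by rw [hρe, h, hw]))
    (fun g => by
      obtain ⟨y, hy⟩ := htr g
      exact hfix _ y (by rw [hρt, hy]))
  refine ⟨ρ₀, fun g => ?_⟩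
  rw [← hρt, ← hρ₀, ι.commutes]

theorem exists_fdRep {G F K : Type} [Group G] [Field F] [Field K] [Algebra F K] {d : ℕ}
    (ρ₀ : G →* Matrix (Fin d) (Fin d) F) :
    ∃ σ : FDRep F G, ∀ g, σ.character g = (ρ₀ g).trace := by
  let ρ : Representation F G (Fin d → F) :=
    (MonoidHomClass.toMonoidHom (Matrix.toLinAlgEquiv' (R := F) (n := Fin d))).comp ρ₀
  refine ⟨FDRep.of ρ, fun g => ?_⟩
  exact Matrix.trace_toLin'_eq (ρ₀ g)

/-- Let `p, q` be distinct odd primes, `G = C_q ⋊ C_{p^n}` non-abelian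
(presented by `a, b` with `a^q = b^{p^n} = 1`, `b a b⁻¹ = a^j`, `j` of order `p^r` mod `q`).
Let `ℓ ≠ q` be a prime, `K` an algebraically closed field of characteristic `0` containing
`ℚ_ℓ`, and `τ` a faithful irreducible representation of `G` over `K`.  Then `τ` is
realisable over the subfield `ℚ_ℓ(τ)` of `K` generated over `ℚ_ℓ` by the values of the
character of `τ`; i.e. the local Schur index of `τ` at `ℓ` is `1`. -/
theorem local_schur_index_one_away_from_q
    (p q n r : ℕ) (hp : p.Prime) (hq : q.Prime) (hpodd : Odd p) (hqodd : Odd q)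
    (hpq : p ≠ q) (hn : 1 ≤ n) (hr0 : 0 < r) (hrn : r ≤ n) (hrdvd : p ^ r ∣ q - 1)
    (G : Type) [Group G] [Fintype G] (a b : G) (j : ℕ)
    (ha : orderOf a = q) (hb : orderOf b = p ^ n)
    (hba : b * a * b⁻¹ = a ^ j) (hj : orderOf (j : ZMod q) = p ^ r)
    (hgen : Subgroup.closure {a, b} = ⊤)
    (ℓ : ℕ) [Fact ℓ.Prime] (hℓq : ℓ ≠ q)
    (K : Type) [Field K] [IsAlgClosed K] [CharZero K] [Algebra ℚ_[ℓ] K]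
    (τ : FDRep K G) [Simple τ] (hτ : Function.Injective τ.ρ) :
    ∃ σ : FDRep
        (Subfield.closure (Set.range (algebraMap ℚ_[ℓ] K) ∪ Set.range τ.character)) G,
      ∀ g : G,
        algebraMap (Subfield.closure (Set.range (algebraMap ℚ_[ℓ] K) ∪ Set.range τ.character)) K
          (σ.character g) = τ.character g := by
  obtain ⟨ζ, ω, R, hζ, hRa, hRb, hRω, hRt⟩ := exists_matrix_form τ.ρ hτ (invariant_eq_top τ) q
    (p ^ r) j hq (pow_pos hp.pos r) a b ha hba hj hgen
  have hRt' : ∀ g, (R g).trace = τ.character g := hRt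
  let F := IntermediateField.adjoin ℚ_[ℓ] (Set.range τ.character)
  obtain ⟨ρ₀, hρ₀⟩ := exists_rep_over_trace_field ℓ (F := F) q (p ^ r) j (p ^ n) hq hℓq (pow_pos hp.pos r)
    (pow_pos hp.pos n) (pow_dvd_pow p hrn) a b (by rw [← ha, pow_orderOf_eq_one])
    (by rw [← hb, pow_orderOf_eq_one]) hba hj hgen ζ ω R hζ hRa hRb hRω
    (fun x => by simp only [hRt']; exact x.2)
    (fun g => ⟨⟨τ.character g, IntermediateField.subset_adjoin _ _ ⟨g, rfl⟩⟩, (hRt' g).symm⟩)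
  obtain ⟨σ, hσ⟩ := exists_fdRep (K := K) ρ₀
  have hσK : ∀ g, algebraMap F K (σ.character g) = τ.character g := fun g => by
    rw [hσ, hρ₀, hRt']
  exact ⟨σ, hσK⟩
end
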